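/- There exists ε > 0 such that for every real number q with 0 < q < ε the following holds: let R(q) := q^{1/5}·(q;q⁵)∞·(q⁴;q⁵)∞ / ((q²;q⁵)∞·(q³;q⁵)∞) and k := R(q)·R(q²)². Then R(q)⁵ = k(1−k)²/(1+k)² and q = q₄( 64k(1+k−k²)⁵ / ((1+k²)²·((1+11k−k²)² − 125k²)²) ). -/

import Mathlib

open scoped Real

/-- The infinite q-Pochhammer symbol `(x;q)∞ = ∏_{n=0}^∞ (1 − x qⁿ)` (real version). -/
noncomputable def qPochInfR (x q : ℝ) : ℝ := ∏' n : ℕ, (1 - x * q ^ n)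

/-- The Rogers–Ramanujan q-product
`R(q) = q^{1/5} (q;q⁵)∞ (q⁴;q⁵)∞ / ((q²;q⁵)∞ (q³;q⁵)∞)`. -/
noncomputable def Rq (q : ℝ) : ℝ :=
  q ^ ((1 : ℝ) / 5) * qPochInfR q (q ^ 5) * qPochInfR (q ^ 4) (q ^ 5)
    / (qPochInfR (q ^ 2) (q ^ 5) * qPochInfR (q ^ 3) (q ^ 5))

/-- The rising factorial `(a)_n = a(a+1)⋯(a+n−1)`. -/
noncomputable def risingFact (a : ℝ) (n : ℕ) : ℝ :=
  ∏ i ∈ Finset.range n, (a + i)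

/-- The Gaussian hypergeometric function `₂F₁(a,b;c;z)`. -/
noncomputable def hyp2F1 (a b c z : ℝ) : ℝ :=
  ∑' n : ℕ, risingFact a n * risingFact b n / (risingFact c n * n.factorial) * z ^ n

/-- The signature-4 elliptic nome
`q₄(α) = exp(−√2·π·₂F₁(1/4,3/4;1;1−α)/₂F₁(1/4,3/4;1;α))`. -/
noncomputable def nome4 (α : ℝ) : ℝ :=
  Real.exp (-(Real.sqrt 2) * Real.pi
    * hyp2F1 (1/4) (3/4) 1 (1 - α) / hyp2F1 (1/4) (3/4) 1 α)


/-! ### Theta series -/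

/-- Triangular exponent `n(n-1)/2`. -/
def triZ (n : ℤ) : ℤ := n * (n - 1) / 2

lemma two_triZ (n : ℤ) : 2 * triZ n = n * (n - 1) := by
  unfold triZ
  have h : Even (n * (n - 1)) := Int.even_mul_pred_self n
  exact Int.mul_ediv_cancel' h.two_dvd

/-- Theta term `Q^{n(n-1)/2} z^n`. -/
noncomputable def thTerm (z Q : ℝ) (n : ℤ) : ℝ := Q ^ triZ n * z ^ n

/-- Theta series `∑ Q^{n(n-1)/2} z^n`. -/
noncomputable def TH (z Q : ℝ) : ℝ := ∑' n : ℤ, thTerm z Q n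

lemma triZ_succ (n : ℤ) : triZ (n + 1) = triZ n + n := by
  have h1 := two_triZ n
  have h2 := two_triZ (n + 1)
  have : 2 * triZ (n + 1) = 2 * (triZ n + n) := by rw [h2, mul_add, h1]; ring
  omega

lemma triZ_neg (n : ℤ) : triZ (-n) = triZ n + n := by
  have h1 := two_triZ n
  have h2 := two_triZ (-n)
  have : 2 * triZ (-n) = 2 * (triZ n + n) := by rw [h2, mul_add, h1]; ring
  omega

lemma triZ_lin (a b n : ℤ) :
    triZ (a * n + b) = a ^ 2 * triZ n + triZ a * n + a * b * n + triZ b := by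
  have h1 := two_triZ n
  have h2 := two_triZ a
  have h3 := two_triZ b
  have h4 := two_triZ (a * n + b)
  have : 2 * triZ (a * n + b) = 2 * (a ^ 2 * triZ n + triZ a * n + a * b * n + triZ b) := by
    linear_combination h4 - a ^ 2 * h1 - n * h2 - h3
  omega

lemma triZ_add (m n : ℤ) : triZ (m + n) = triZ m + triZ n + m * n := by
  have h1 := two_triZ n
  have h2 := two_triZ m
  have h4 := two_triZ (m + n)
  have : 2 * triZ (m + n) = 2 * (triZ m + triZ n + m * n) := by
    linear_combination h4 - h1 - h2
  omega

lemma thTerm_succ {z Q : ℝ} (hz : z ≠ 0) (hQ : Q ≠ 0) (n : ℤ) :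
    thTerm z Q (n + 1) = (Q ^ n * z) * thTerm z Q n := by
  unfold thTerm
  rw [triZ_succ, zpow_add₀ hQ, zpow_add₀ hz, zpow_one]; ring

lemma thTerm_neg {z Q : ℝ} (hz : z ≠ 0) (hQ : Q ≠ 0) (n : ℤ) :
    thTerm z Q (-n) = thTerm (Q / z) Q n := by
  unfold thTerm
  rw [triZ_neg, zpow_add₀ hQ, zpow_neg, div_zpow]
  have := zpow_ne_zero n hz
  field_simp

lemma summable_thTerm_nat {z Q : ℝ} (hz : z ≠ 0) (h0 : 0 < Q) (h1 : Q < 1) :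
    Summable (fun n : ℕ => thTerm z Q n) := by
  have hne : ∀ n : ℤ, thTerm z Q n ≠ 0 := fun n =>
    mul_ne_zero (zpow_ne_zero _ h0.ne') (zpow_ne_zero _ hz)
  refine summable_of_ratio_test_tendsto_lt_one (l := 0) one_pos
    (Filter.Eventually.of_forall fun n => hne n) ?_
  have : ∀ n : ℕ, ‖thTerm z Q ((n + 1 : ℕ) : ℤ)‖ / ‖thTerm z Q (n : ℤ)‖ = Q ^ n * |z| := by
    intro n
    push_cast
    rw [thTerm_succ hz h0.ne', norm_mul, mul_div_assoc, div_self (norm_ne_zero_iff.2 (hne n)),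
      mul_one, norm_mul, Real.norm_eq_abs, Real.norm_eq_abs, zpow_natCast, abs_of_pos (pow_pos h0 n)]
  simp_rw [this]
  simpa using (tendsto_pow_atTop_nhds_zero_of_lt_one h0.le h1).mul_const |z|

lemma summable_thTerm {z Q : ℝ} (hz : z ≠ 0) (h0 : 0 < Q) (h1 : Q < 1) :
    Summable (thTerm z Q) := by
  refine Summable.of_nat_of_neg (summable_thTerm_nat hz h0 h1) ?_
  simp_rw [thTerm_neg hz h0.ne']
  exact summable_thTerm_nat (div_ne_zero h0.ne' hz) h0 h1

lemma TH_symm {z Q : ℝ} (hz : z ≠ 0) (hQ : Q ≠ 0) : TH (Q / z) Q = TH z Q := by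
  unfold TH
  rw [← (Equiv.neg ℤ).tsum_eq (thTerm z Q)]
  refine tsum_congr fun n => ?_
  simp [thTerm_neg hz hQ]

lemma TH_shift {z Q : ℝ} (hz : z ≠ 0) (hQ : Q ≠ 0) : z * TH (Q * z) Q = TH z Q := by
  unfold TH
  rw [← (Equiv.addRight (1 : ℤ)).tsum_eq (thTerm z Q), ← tsum_mul_left]
  refine tsum_congr fun n => ?_
  simp only [Equiv.coe_addRight]
  rw [thTerm_succ hz hQ]
  unfold thTerm
  rw [mul_zpow]; ring

lemma thTerm_prod_summable {z w Q : ℝ} (hz : z ≠ 0) (hw : w ≠ 0) (h0 : 0 < Q) (h1 : Q < 1) :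
    Summable (fun p : ℤ × ℤ => thTerm z Q p.1 * thTerm w Q p.2) :=
  summable_mul_of_summable_norm (summable_thTerm hz h0 h1).norm (summable_thTerm hw h0 h1).norm

lemma TH_mul {z w Q R : ℝ} (hz : z ≠ 0) (hw : w ≠ 0) (h0 : 0 < Q) (h1 : Q < 1)
    (h0' : 0 < R) (h1' : R < 1) :
    TH z Q * TH w R = ∑' p : ℤ × ℤ, thTerm z Q p.1 * thTerm w R p.2 :=
  tsum_mul_tsum_of_summable_norm (summable_thTerm hz h0 h1).norm (summable_thTerm hw h0' h1').norm

/-- parity splitting -/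
noncomputable def eqv2 : Fin 2 × (ℤ × ℤ) ≃ ℤ × ℤ :=
  Equiv.ofBijective (fun p => (p.2.1 + p.2.2 + (p.1.val : ℤ), p.2.1 - p.2.2)) (by
    constructor
    · rintro ⟨c, r, s⟩ ⟨c', r', s'⟩ h
      simp only [Prod.mk.injEq] at h
      obtain ⟨h1, h2⟩ := h
      have := c.2; have := c'.2
      have hc : c.val = c'.val := by omega
      refine Prod.ext (Fin.ext hc) (Prod.ext ?_ ?_) <;> simp only <;> omega
    · rintro ⟨x, y⟩
      refine ⟨(⟨((x + y) % 2).toNat, by omega⟩, ((x + y) / 2, (x + y) / 2 - y)), ?_⟩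
      simp only [Prod.mk.injEq]
      omega)

/-- splitting modulo five -/
noncomputable def eqv5 : Fin 5 × (ℤ × ℤ) ≃ ℤ × ℤ :=
  Equiv.ofBijective (fun p => (2 * p.2.1 + p.2.2 + (p.1.val : ℤ), 2 * p.2.2 - p.2.1)) (by
    constructor
    · rintro ⟨c, r, s⟩ ⟨c', r', s'⟩ h
      simp only [Prod.mk.injEq] at h
      obtain ⟨h1, h2⟩ := h
      have := c.2; have := c'.2
      have hc : c.val = c'.val := by omega
      refine Prod.ext (Fin.ext hc) (Prod.ext ?_ ?_) <;> simp only <;> omega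
    · rintro ⟨x, y⟩
      refine ⟨(⟨((x + 2 * y) % 5).toNat, by omega⟩,
        (2 * ((x + 2 * y) / 5) - y, (x + 2 * y) / 5)), ?_⟩
      simp only [Prod.mk.injEq]
      omega)

/-- one-dimensional parity splitting -/
noncomputable def eqv1 : Fin 2 × ℤ ≃ ℤ :=
  Equiv.ofBijective (fun p => 2 * p.2 + (p.1.val : ℤ)) (by
    constructor
    · rintro ⟨c, r⟩ ⟨c', r'⟩ h
      simp only at h
      have := c.2; have := c'.2
      have hc : c.val = c'.val := by omega
      refine Prod.ext (Fin.ext hc) ?_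
      simp only
      omega
    · rintro x
      refine ⟨(⟨(x % 2).toNat, by omega⟩, x / 2), ?_⟩
      simp only
      omega)

lemma eqv1_apply (c : Fin 2) (n : ℤ) : eqv1 (c, n) = 2 * n + (c.val : ℤ) := rfl

lemma eqv2_apply (c : Fin 2) (r s : ℤ) : eqv2 (c, (r, s)) = (r + s + (c.val : ℤ), r - s) := rfl

lemma eqv5_apply (c : Fin 5) (m n : ℤ) :
    eqv5 (c, (m, n)) = (2 * m + n + (c.val : ℤ), 2 * n - m) := rfl

lemma TH_L2 {z Q : ℝ} (hz : z ≠ 0) (h0 : 0 < Q) (h1 : Q < 1) :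
    TH z Q = TH (Q * z ^ 2) (Q ^ 4) + z * TH (Q ^ 3 * z ^ 2) (Q ^ 4) := by
  have hs := summable_thTerm hz h0 h1
  have hs' := eqv1.summable_iff.2 hs
  simp only [Function.comp_def] at hs'
  unfold TH
  rw [← eqv1.tsum_eq (thTerm z Q), hs'.tsum_prod, tsum_fintype, Fin.sum_univ_two, ← tsum_mul_left]
  have hQ := h0.ne'
  congr 1
  · refine tsum_congr fun n => ?_
    simp only [eqv1_apply, thTerm, Fin.val_zero]
    rw [show triZ (2 * n + ((0 : ℕ) : ℤ)) = 4 * triZ n + n by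
      rw [triZ_lin]; simp [triZ]]
    rw [zpow_add₀ hQ, zpow_mul, mul_zpow, Nat.cast_zero, add_zero, zpow_mul]
    simp only [zpow_ofNat]; ring
  · refine tsum_congr fun n => ?_
    simp only [eqv1_apply, thTerm, Fin.val_one]
    rw [show triZ (2 * n + ((1 : ℕ) : ℤ)) = 4 * triZ n + 3 * n by
      rw [triZ_lin]; simp [triZ]; ring]
    rw [zpow_add₀ hQ, zpow_mul, mul_zpow, Nat.cast_one, zpow_add₀ hz, zpow_mul, zpow_mul]
    simp only [zpow_ofNat, zpow_one]; ring

lemma TH_L1 {z w Q : ℝ} (hz : z ≠ 0) (hw : w ≠ 0) (h0 : 0 < Q) (h1 : Q < 1) :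
    TH z Q * TH w Q = TH (z * w) (Q ^ 2) * TH (Q * z / w) (Q ^ 2)
      + z * (TH (Q * (z * w)) (Q ^ 2) * TH (Q ^ 2 * z / w) (Q ^ 2)) := by
  have hs' := eqv2.summable_iff.2 (thTerm_prod_summable hz hw h0 h1)
  simp only [Function.comp_def] at hs'
  have hQ := h0.ne'
  have h02 : 0 < Q ^ 2 := by positivity
  have h12 : Q ^ 2 < 1 := pow_lt_one₀ h0.le h1 two_ne_zero
  rw [TH_mul hz hw h0 h1 h0 h1, TH_mul (by positivity) (by positivity) h02 h12 h02 h12,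
    TH_mul (by positivity) (by positivity) h02 h12 h02 h12,
    ← eqv2.tsum_eq, hs'.tsum_prod, tsum_fintype, Fin.sum_univ_two, ← tsum_mul_left]
  congr 1
  · refine tsum_congr fun p => ?_
    obtain ⟨r, s⟩ := p
    simp only [eqv2_apply, thTerm, Fin.val_zero]
    rw [show r + s + ((0 : ℕ) : ℤ) = r + s by simp]
    have e : triZ (r + s) + triZ (r - s) = 2 * triZ r + (2 * triZ s + s) := by
      rw [triZ_add, sub_eq_add_neg, triZ_add, triZ_neg]; ring
    rw [show ∀ a b c d : ℝ, a * b * (c * d) = (a * c) * (b * d) by intros; ring,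
      ← zpow_add₀ hQ, e, zpow_add₀ hQ, zpow_add₀ hQ, zpow_mul, zpow_mul, div_zpow, mul_zpow, mul_zpow,
      zpow_add₀ hz, zpow_sub₀ hw]
    simp only [zpow_ofNat]; ring
  · refine tsum_congr fun p => ?_
    obtain ⟨r, s⟩ := p
    simp only [eqv2_apply, thTerm, Fin.val_one]
    rw [show r + s + ((1 : ℕ) : ℤ) = r + s + 1 by simp]
    have e : triZ (r + s + 1) + triZ (r - s) = (2 * triZ r + r) + (2 * triZ s + 2 * s) := by
      rw [triZ_succ, triZ_add, sub_eq_add_neg, triZ_add, triZ_neg]; ring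
    rw [show ∀ a b c d : ℝ, a * b * (c * d) = (a * c) * (b * d) by intros; ring,
      ← zpow_add₀ hQ, e, zpow_add₀ hQ, zpow_add₀ hQ, zpow_add₀ hQ, zpow_mul, zpow_mul, zpow_mul,
      div_zpow, mul_zpow, mul_zpow, mul_zpow,
      zpow_add₀ hz, zpow_add₀ hz, zpow_sub₀ hw]
    simp only [zpow_ofNat, zpow_one]; ring

lemma TH_L3 {z w Q : ℝ} (hz : z ≠ 0) (hw : w ≠ 0) (h0 : 0 < Q) (h1 : Q < 1) :
    TH z Q * TH w Q = ∑ c : Fin 5, Q ^ (triZ c.val) * z ^ c.val *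
      (TH (Q ^ (2 + 2 * c.val) * z ^ 2 / w) (Q ^ 5) * TH (Q ^ (1 + c.val) * z * w ^ 2) (Q ^ 5)) := by
  have hs' := eqv5.summable_iff.2 (thTerm_prod_summable hz hw h0 h1)
  simp only [Function.comp_def] at hs'
  have hQ := h0.ne'
  have h02 : 0 < Q ^ 5 := by positivity
  have h12 : Q ^ 5 < 1 := pow_lt_one₀ h0.le h1 (by norm_num)
  rw [TH_mul hz hw h0 h1 h0 h1, ← eqv5.tsum_eq, hs'.tsum_prod, tsum_fintype]
  refine Finset.sum_congr rfl fun c _ => ?_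
  rw [TH_mul (by positivity) (by positivity) h02 h12 h02 h12, ← tsum_mul_left]
  refine tsum_congr fun p => ?_
  obtain ⟨m, n⟩ := p
  simp only [eqv5_apply, thTerm]
  generalize c.val = c
  have e : triZ (2 * m + n + c) + triZ (2 * n - m) =
      triZ c + ((5 * triZ m + (2 + 2 * c) * m) + (5 * triZ n + (1 + c) * n)) := by
    have h1 := two_triZ m
    have h2 := two_triZ n
    have h3 := two_triZ (c : ℤ)
    have h4 := two_triZ (2 * m + n + c)
    have h5 := two_triZ (2 * n - m)
    have : 2 * (triZ (2 * m + n + c) + triZ (2 * n - m)) =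
      2 * (triZ c + ((5 * triZ m + (2 + 2 * c) * m) + (5 * triZ n + (1 + c) * n))) := by
      linear_combination h4 + h5 - h3 - 5 * h1 - 5 * h2
    omega
  rw [show ∀ a b c d : ℝ, a * b * (c * d) = (a * c) * (b * d) by intros; ring,
    ← zpow_add₀ hQ, e, zpow_add₀ hQ, zpow_add₀ hQ, zpow_add₀ hQ, zpow_add₀ hQ, zpow_mul, zpow_mul,
    zpow_mul, zpow_mul, div_zpow, mul_zpow, mul_zpow, mul_zpow,
    zpow_add₀ hz, zpow_add₀ hz, zpow_sub₀ hw, zpow_mul, zpow_mul,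
    show ((2 : ℤ) + 2 * (c : ℤ)) = ((2 + 2 * c : ℕ) : ℤ) by push_cast; ring,
    show ((1 : ℤ) + (c : ℤ)) = ((1 + c : ℕ) : ℤ) by push_cast; ring]
  simp only [zpow_natCast, zpow_ofNat]; ring

/-! ### Infinite products -/

open Filter Topology in
lemma poch_mult (x : ℝ) {q : ℝ} (h0 : 0 < q) (h1 : q < 1) :
    Multipliable (fun n : ℕ => 1 - x * q ^ n) := by
  have : Summable (fun n : ℕ => -(x * q ^ n)) :=
    ((summable_geometric_of_lt_one h0.le h1).mul_left x).neg
  simpa [sub_eq_add_neg] using Real.multipliable_one_add_of_summable this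

open Filter Topology in
lemma poch_tendsto (x : ℝ) {q : ℝ} (h0 : 0 < q) (h1 : q < 1) :
    Tendsto (fun N : ℕ => ∏ n ∈ Finset.range N, (1 - x * q ^ n)) atTop (𝓝 (qPochInfR x q)) :=
  (poch_mult x h0 h1).hasProd.tendsto_prod_nat

lemma poch_pos {x q : ℝ} (hx : x < 1) (h0 : 0 < q) (h1 : q < 1) : 0 < qPochInfR x q := by
  have hf : ∀ n : ℕ, 0 < 1 - x * q ^ n := by
    intro n
    have hq1 : q ^ n ≤ 1 := pow_le_one₀ h0.le h1.le
    have hq0 : 0 < q ^ n := pow_pos h0 n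
    rcases le_or_gt x 0 with h | h
    · nlinarith
    · nlinarith
  have hnn : 0 ≤ qPochInfR x q :=
    ge_of_tendsto' (poch_tendsto x h0 h1) fun N => Finset.prod_nonneg fun n _ => (hf n).le
  have hne : qPochInfR x q ≠ 0 := by
    have hs : Summable (fun n : ℕ => ‖-(x * q ^ n)‖) :=
      (((summable_geometric_of_lt_one h0.le h1).mul_left x).neg).norm
    have := tprod_one_add_ne_zero_of_summable (f := fun n : ℕ => -(x * q ^ n))
      (fun n => by have := (hf n).ne'; simpa [sub_eq_add_neg] using this) hs
    unfold qPochInfR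
    simpa [sub_eq_add_neg] using this
  exact lt_of_le_of_ne hnn hne.symm

lemma poch_succ (x : ℝ) {q : ℝ} (h0 : 0 < q) (h1 : q < 1) :
    qPochInfR x q = (1 - x) * qPochInfR (x * q) q := by
  have h := (poch_tendsto (x * q) h0 h1).const_mul (1 - x)
  have h' := (poch_tendsto x h0 h1).comp (Filter.tendsto_add_atTop_nat 1)
  refine tendsto_nhds_unique h' (h.congr fun N => ?_)
  simp only [Function.comp]
  rw [Finset.prod_range_succ', mul_comm]
  simp [pow_succ, mul_assoc, mul_comm, mul_left_comm]

lemma poch_mul_neg (x : ℝ) {q : ℝ} (h0 : 0 < q) (h1 : q < 1) :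
    qPochInfR x q * qPochInfR (-x) q = qPochInfR (x ^ 2) (q ^ 2) := by
  unfold qPochInfR
  rw [← (poch_mult x h0 h1).tprod_mul (poch_mult (-x) h0 h1)]
  refine tprod_congr fun n => ?_
  ring

lemma prod_range_mul_five (f : ℕ → ℝ) (N : ℕ) :
    ∏ n ∈ Finset.range (5 * N), f n = (∏ n ∈ Finset.range N, f (5 * n)) *
      (∏ n ∈ Finset.range N, f (5 * n + 1)) * (∏ n ∈ Finset.range N, f (5 * n + 2)) *
      (∏ n ∈ Finset.range N, f (5 * n + 3)) * (∏ n ∈ Finset.range N, f (5 * n + 4)) := by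
  induction N with
  | zero => simp
  | succ N ih =>
    rw [show 5 * (N + 1) = 5 * N + 1 + 1 + 1 + 1 + 1 by ring]
    simp only [Finset.prod_range_succ]
    rw [ih]; ring

lemma prod_range_mul_two (f : ℕ → ℝ) (N : ℕ) :
    ∏ n ∈ Finset.range (2 * N), f n = (∏ n ∈ Finset.range N, f (2 * n)) *
      (∏ n ∈ Finset.range N, f (2 * n + 1)) := by
  induction N with
  | zero => simp
  | succ N ih =>
    rw [show 2 * (N + 1) = 2 * N + 1 + 1 by ring]
    simp only [Finset.prod_range_succ]
    rw [ih]; ring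

lemma poch_split2 (x : ℝ) {q : ℝ} (h0 : 0 < q) (h1 : q < 1) :
    qPochInfR x q = qPochInfR x (q ^ 2) * qPochInfR (x * q) (q ^ 2) := by
  have h02 : 0 < q ^ 2 := by positivity
  have h12 : q ^ 2 < 1 := pow_lt_one₀ h0.le h1 (by norm_num)
  have h := (poch_tendsto x h02 h12).mul (poch_tendsto (x * q) h02 h12)
  have h' := (poch_tendsto x h0 h1).comp
    (Filter.tendsto_id.const_mul_atTop' (show 0 < 2 by norm_num))
  refine tendsto_nhds_unique h' (h.congr fun N => ?_)
  simp only [Function.comp, id]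
  rw [prod_range_mul_two]
  congr 1 <;> refine Finset.prod_congr rfl fun n _ => ?_ <;> ring

lemma poch_split5 (x : ℝ) {q : ℝ} (h0 : 0 < q) (h1 : q < 1) :
    qPochInfR x q = qPochInfR x (q ^ 5) * qPochInfR (x * q) (q ^ 5) * qPochInfR (x * q ^ 2) (q ^ 5)
      * qPochInfR (x * q ^ 3) (q ^ 5) * qPochInfR (x * q ^ 4) (q ^ 5) := by
  have h02 : 0 < q ^ 5 := by positivity
  have h12 : q ^ 5 < 1 := pow_lt_one₀ h0.le h1 (by norm_num)
  have h := ((((poch_tendsto x h02 h12).mul (poch_tendsto (x * q) h02 h12)).mul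
    (poch_tendsto (x * q ^ 2) h02 h12)).mul (poch_tendsto (x * q ^ 3) h02 h12)).mul
    (poch_tendsto (x * q ^ 4) h02 h12)
  have h' := (poch_tendsto x h0 h1).comp
    (Filter.tendsto_id.const_mul_atTop' (show 0 < 5 by norm_num))
  refine tendsto_nhds_unique h' (h.congr fun N => ?_)
  simp only [Function.comp, id]
  rw [prod_range_mul_five]
  congr 1
  · congr 1
    · congr 1
      · congr 1 <;> refine Finset.prod_congr rfl fun n _ => ?_ <;> ring
      · refine Finset.prod_congr rfl fun n _ => ?_
        ring
    · refine Finset.prod_congr rfl fun n _ => ?_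
      ring
  · refine Finset.prod_congr rfl fun n _ => ?_
    ring

/-! ### Jacobi triple product -/

/-- Gaussian binomial coefficients. -/
noncomputable def gbin (Q : ℝ) : ℕ → ℕ → ℝ
  | _, 0 => 1
  | 0, _ + 1 => 0
  | M + 1, j + 1 => gbin Q M (j + 1) + Q ^ (M - j) * gbin Q M j

lemma gbin_zero_right (Q : ℝ) (M : ℕ) : gbin Q M 0 = 1 := by cases M <;> simp [gbin]

lemma gbin_lt (Q : ℝ) : ∀ (M j : ℕ), M < j → gbin Q M j = 0
  | 0, 0, h => by omega
  | 0, j + 1, _ => by simp [gbin]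
  | M + 1, 0, h => by omega
  | M + 1, j + 1, h => by
    rw [gbin, gbin_lt Q M (j + 1) (by omega), gbin_lt Q M j (by omega)]; simp

lemma choose_two_succ (j : ℕ) : (j + 1).choose 2 = j.choose 2 + j := by
  rw [Nat.choose_succ_succ' j 1, Nat.choose_one_right, add_comm]

lemma gbin_sum (Q x : ℝ) (M : ℕ) :
    ∏ k ∈ Finset.range M, (1 + x * Q ^ k)
      = ∑ j ∈ Finset.range (M + 1), gbin Q M j * Q ^ (j.choose 2) * x ^ j := by
  induction M with
  | zero => simp [gbin]
  | succ M ih =>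
    rw [Finset.prod_range_succ, Finset.sum_range_succ']
    have e1 : ∑ j ∈ Finset.range (M + 1), gbin Q (M + 1) (j + 1) * Q ^ ((j + 1).choose 2) * x ^ (j + 1)
        = ∑ j ∈ Finset.range (M + 1), gbin Q M (j + 1) * Q ^ ((j + 1).choose 2) * x ^ (j + 1)
          + x * Q ^ M * ∑ j ∈ Finset.range (M + 1), gbin Q M j * Q ^ (j.choose 2) * x ^ j := by
      rw [Finset.mul_sum, ← Finset.sum_add_distrib]
      refine Finset.sum_congr rfl fun j hj => ?_
      have hj' : j ≤ M := by have := Finset.mem_range.1 hj; omega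
      have : Q ^ M = Q ^ (M - j) * Q ^ j := by rw [← pow_add]; congr 1; omega
      rw [this, gbin, choose_two_succ]; ring
    have e2 : ∑ j ∈ Finset.range (M + 1), gbin Q M (j + 1) * Q ^ ((j + 1).choose 2) * x ^ (j + 1) + 1
        = ∑ j ∈ Finset.range (M + 1), gbin Q M j * Q ^ (j.choose 2) * x ^ j := by
      have := Finset.sum_range_succ' (fun j => gbin Q M j * Q ^ (j.choose 2) * x ^ j) (M + 1)
      rw [Finset.sum_range_succ] at this
      simp only [gbin_lt Q M (M + 1) (by omega), gbin_zero_right] at this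
      simp at this
      simp [this]
    rw [e1, ih, gbin_zero_right]
    simp only [Nat.choose_zero_succ, pow_zero, mul_one]
    linear_combination -e2

/-- finite Euler products -/
noncomputable def qfin (Q : ℝ) (M : ℕ) : ℝ := ∏ k ∈ Finset.range M, (1 - Q * Q ^ k)

lemma qfin_succ (Q : ℝ) (M : ℕ) : qfin Q (M + 1) = qfin Q M * (1 - Q * Q ^ M) := by
  simp [qfin, Finset.prod_range_succ]

lemma gbin_formula (Q : ℝ) : ∀ (M j : ℕ), j ≤ M → qfin Q j * qfin Q (M - j) * gbin Q M j = qfin Q M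
  | 0, 0, _ => by simp [gbin, qfin]
  | 0, j + 1, h => by omega
  | M + 1, 0, _ => by simp [gbin, qfin]
  | M + 1, j + 1, h => by
    rcases Nat.lt_or_ge j M with hlt | hge
    · have h1 := gbin_formula Q M (j + 1) (by omega)
      have h2 := gbin_formula Q M j (by omega)
      obtain ⟨d, rfl⟩ : ∃ d, M = j + 1 + d := ⟨M - (j + 1), by omega⟩
      rw [show j + 1 + d - (j + 1) = d by omega] at h1
      rw [show j + 1 + d - j = d + 1 by omega] at h2
      rw [gbin, show j + 1 + d + 1 - (j + 1) = d + 1 by omega, show j + 1 + d - j = d + 1 by omega,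
        qfin_succ Q (j + 1 + d)]
      have e3 : qfin Q (j + 1) * qfin Q (d + 1) * gbin Q (j + 1 + d) (j + 1)
          = (1 - Q * Q ^ d) * qfin Q (j + 1 + d) := by
        rw [← h1, qfin_succ Q d]; ring
      have e4 : qfin Q (j + 1) * qfin Q (d + 1) * gbin Q (j + 1 + d) j
          = (1 - Q * Q ^ j) * qfin Q (j + 1 + d) := by
        rw [← h2, qfin_succ Q j]; ring
      rw [mul_add, e3, mul_left_comm, e4]; ring
    · have : j = M := by omega
      subst this
      have h2 := gbin_formula Q j j le_rfl
      rw [gbin, gbin_lt Q j (j + 1) (by omega)]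
      simp only [Nat.sub_self] at h2 ⊢
      rw [qfin_succ]
      linear_combination (1 - Q * Q ^ j) * h2

lemma choose_two_cast (j : ℕ) : ((j.choose 2 : ℕ) : ℤ) = triZ j := by
  induction j with
  | zero => simp [triZ]
  | succ j ih => rw [choose_two_succ]; push_cast; rw [ih, triZ_succ]

lemma prod_refl_aux {z Q : ℝ} (hz : z ≠ 0) (hQ : Q ≠ 0) (N : ℕ) :
    ∏ k ∈ Finset.range N, (1 + z * Q ^ (-(N : ℤ)) * Q ^ k)
      = z ^ N * Q ^ (-(triZ (N + 1))) * ∏ k ∈ Finset.range N, (1 + Q / z * Q ^ k) := by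
  induction N with
  | zero => simp [triZ]
  | succ N ih =>
    rw [Finset.prod_range_succ', Finset.prod_range_succ]
    have : ∀ k : ℕ, 1 + z * Q ^ (-((N + 1 : ℕ) : ℤ)) * Q ^ (k + 1)
        = 1 + z * Q ^ (-(N : ℤ)) * Q ^ k := by
      intro k
      push_cast
      rw [neg_add, zpow_add₀ hQ, pow_succ, zpow_neg_one]; field_simp
    simp only [this]
    rw [ih, pow_zero, mul_one]
    push_cast
    rw [triZ_succ (N + 1)]
    rw [show (-(triZ ((N : ℤ) + 1) + ((N : ℤ) + 1))) = -(triZ ((N : ℤ) + 1)) + (-((N : ℤ) + 1)) by ring,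
      zpow_add₀ hQ]
    have e : (1 + z * Q ^ (-((N : ℤ) + 1))) = z * Q ^ (-((N : ℤ) + 1)) * (1 + Q / z * Q ^ N) := by
      have : Q ^ (-((N : ℤ) + 1)) * (Q * Q ^ N) = 1 := by
        rw [← pow_succ', ← zpow_natCast, ← zpow_add₀ hQ]; simp
      have h2 : z * Q ^ (-((N : ℤ) + 1)) * (1 + Q / z * Q ^ N)
        = z * Q ^ (-((N : ℤ) + 1)) + Q ^ (-((N : ℤ) + 1)) * (Q * Q ^ N) := by field_simp
      rw [h2, this, add_comm]
    rw [e, pow_succ]; ring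

/-- coefficients of the finite triple product -/
noncomputable def jcoef (Q : ℝ) (N : ℕ) (n : ℤ) : ℝ :=
  if -(N : ℤ) ≤ n then gbin Q (2 * N) (n + N).toNat else 0

lemma finite_jtp {z Q : ℝ} (hz : z ≠ 0) (hQ : Q ≠ 0) (N : ℕ) :
    (∏ k ∈ Finset.range N, (1 + z * Q ^ k)) * ∏ k ∈ Finset.range N, (1 + Q / z * Q ^ k)
      = ∑' n : ℤ, jcoef Q N n * thTerm z Q n := by
  have h := gbin_sum Q (z * Q ^ (-(N : ℤ))) (2 * N)
  have hl : ∏ k ∈ Finset.range (2 * N), (1 + z * Q ^ (-(N : ℤ)) * Q ^ k)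
      = (∏ k ∈ Finset.range N, (1 + z * Q ^ (-(N : ℤ)) * Q ^ k)) *
        ∏ k ∈ Finset.range N, (1 + z * Q ^ k) := by
    rw [two_mul, Finset.prod_range_add]
    congr 1
    refine Finset.prod_congr rfl fun k _ => ?_
    rw [pow_add, mul_assoc z, ← mul_assoc (Q ^ (-(N : ℤ))), ← zpow_natCast Q N, ← zpow_add₀ hQ]
    simp
  rw [hl, prod_refl_aux hz hQ] at h
  have hc : z ^ N * Q ^ (-(triZ (N + 1))) ≠ 0 :=
    mul_ne_zero (pow_ne_zero _ hz) (zpow_ne_zero _ hQ)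
  let emb : ℕ ↪ ℤ := ⟨fun j => (j : ℤ) - N, fun a b hab => by simpa using hab⟩
  have hr : ∑' n : ℤ, jcoef Q N n * thTerm z Q n
      = ∑ j ∈ Finset.range (2 * N + 1), jcoef Q N (emb j) * thTerm z Q (emb j) := by
    rw [← Finset.sum_map (Finset.range (2 * N + 1)) emb (fun n => jcoef Q N n * thTerm z Q n)]
    refine tsum_eq_sum fun n hn => ?_
    have : jcoef Q N n = 0 := by
      unfold jcoef
      split_ifs with hle
      · apply gbin_lt
        by_contra hcon
        apply hn
        rw [Finset.mem_map]
        refine ⟨(n + N).toNat, Finset.mem_range.2 (by omega), ?_⟩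
        change (((n + N).toNat : ℕ) : ℤ) - N = n
        omega
      · rfl
    rw [this, zero_mul]
  apply mul_left_cancel₀ hc
  rw [hr, Finset.mul_sum]
  refine Eq.trans ?_ (h.trans (Finset.sum_congr rfl fun j _ => ?_))
  · ring
  · have e0 : emb j = (j : ℤ) - N := rfl
    have e1 : jcoef Q N (emb j) = gbin Q (2 * N) j := by
      unfold jcoef
      rw [e0, if_pos (by omega)]; simp
    rw [e1, e0]
    unfold thTerm
    rw [← zpow_natCast Q (j.choose 2), choose_two_cast, mul_pow, ← zpow_natCast (Q ^ (-(N : ℤ))) j,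
      ← zpow_mul, zpow_sub₀ hz, zpow_natCast, zpow_natCast]
    have e2 : triZ j + (-(N : ℤ)) * j = -(triZ (N + 1)) + triZ ((j : ℤ) - N) := by
      rw [triZ_succ, sub_eq_add_neg, triZ_add, triZ_neg]; ring
    have e3 : Q ^ triZ (j : ℤ) * Q ^ (-(N : ℤ) * j)
        = Q ^ (-(triZ (N + 1))) * Q ^ triZ ((j : ℤ) - N) := by
      rw [← zpow_add₀ hQ, e2, zpow_add₀ hQ]
    have hzN := pow_ne_zero N hz
    field_simp
    linear_combination (gbin Q (2 * N) j) * e3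

lemma qfin_tendsto {Q : ℝ} (h0 : 0 < Q) (h1 : Q < 1) :
    Filter.Tendsto (qfin Q) Filter.atTop (nhds (qPochInfR Q Q)) := poch_tendsto Q h0 h1

lemma qfin_anti {Q : ℝ} (h0 : 0 < Q) (h1 : Q < 1) : Antitone (qfin Q) := by
  have hpos : ∀ M, 0 ≤ qfin Q M := fun M => Finset.prod_nonneg fun k _ => by
    have : Q ^ k ≤ 1 := pow_le_one₀ h0.le h1.le
    nlinarith
  refine antitone_nat_of_succ_le fun M => ?_
  rw [qfin_succ]
  have : 0 ≤ Q * Q ^ M := by positivity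
  nlinarith [hpos M]

lemma qfin_ge {Q : ℝ} (h0 : 0 < Q) (h1 : Q < 1) (M : ℕ) : qPochInfR Q Q ≤ qfin Q M :=
  (qfin_anti h0 h1).le_of_tendsto (qfin_tendsto h0 h1) M

open Filter Topology in
lemma jtp_aux {z Q : ℝ} (hz : z ≠ 0) (h0 : 0 < Q) (h1 : Q < 1) :
    qPochInfR (-z) Q * qPochInfR (-(Q / z)) Q = ∑' n : ℤ, (qPochInfR Q Q)⁻¹ * thTerm z Q n := by
  have hE := poch_pos h1 h0 h1
  have hl := (poch_tendsto (-z) h0 h1).mul (poch_tendsto (-(Q / z)) h0 h1)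
  have hq : ∀ M, 0 < qfin Q M := fun M => hE.trans_le (qfin_ge h0 h1 M)
  have hgb : ∀ M j, j ≤ M → gbin Q M j = qfin Q M / (qfin Q j * qfin Q (M - j)) := by
    intro M j hj
    rw [eq_div_iff (mul_pos (hq _) (hq _)).ne', mul_comm]
    exact gbin_formula Q M j hj
  refine tendsto_nhds_unique hl ?_
  have e : (fun N : ℕ => (∏ n ∈ Finset.range N, (1 - (-z) * Q ^ n)) *
      ∏ n ∈ Finset.range N, (1 - (-(Q / z)) * Q ^ n))
      = fun N : ℕ => ∑' n : ℤ, jcoef Q N n * thTerm z Q n := by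
    funext N
    rw [← finite_jtp hz h0.ne']
    simp only [neg_mul, sub_neg_eq_add]
  rw [e]
  refine tendsto_tsum_of_dominated_convergence
    (bound := fun n => (qPochInfR Q Q * qPochInfR Q Q)⁻¹ * ‖thTerm z Q n‖)
    ((summable_thTerm hz h0 h1).norm.mul_left _) ?_ ?_
  · intro n
    refine Tendsto.mul_const _ ?_
    have t1 : Tendsto (fun N : ℕ => 2 * N) atTop atTop :=
      tendsto_id.const_mul_atTop' (show 0 < 2 by norm_num)
    have t2 : Tendsto (fun N : ℕ => (n + N).toNat) atTop atTop := by
      refine tendsto_atTop.2 fun b => ?_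
      filter_upwards [eventually_ge_atTop (b + n.natAbs)] with N hN
      omega
    have t3 : Tendsto (fun N : ℕ => 2 * N - (n + N).toNat) atTop atTop := by
      refine tendsto_atTop.2 fun b => ?_
      filter_upwards [eventually_ge_atTop (b + n.natAbs)] with N hN
      omega
    have hT := qfin_tendsto h0 h1
    have := (hT.comp t1).div ((hT.comp t2).mul (hT.comp t3)) (mul_pos hE hE).ne'
    rw [show (qPochInfR Q Q)⁻¹ = qPochInfR Q Q / (qPochInfR Q Q * qPochInfR Q Q) by
      field_simp]
    refine this.congr' ?_
    filter_upwards [eventually_ge_atTop n.natAbs] with N hN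
    unfold jcoef
    rw [if_pos (by omega), hgb _ _ (by omega)]
    simp
  · refine Eventually.of_forall fun N n => ?_
    rw [norm_mul]
    refine mul_le_mul_of_nonneg_right ?_ (norm_nonneg _)
    unfold jcoef
    split_ifs with hle
    · rcases Nat.lt_or_ge (2 * N) (n + N).toNat with hlt | hge
      · rw [gbin_lt _ _ _ hlt]; simp; positivity
      · rw [hgb _ _ hge, Real.norm_eq_abs, abs_of_pos (div_pos (hq _) (mul_pos (hq _) (hq _))),
          ← one_div]
        refine div_le_div₀ zero_le_one ?_ (mul_pos hE hE) ?_
        · have := qfin_anti h0 h1 (Nat.zero_le (2 * N))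
          simpa [qfin] using this
        · exact mul_le_mul (qfin_ge h0 h1 _) (qfin_ge h0 h1 _) hE.le (hq _).le
    · simp; positivity

/-- Jacobi's triple product identity. -/
lemma jtp {z Q : ℝ} (hz : z ≠ 0) (h0 : 0 < Q) (h1 : Q < 1) :
    TH z Q = qPochInfR (-z) Q * qPochInfR (-(Q / z)) Q * qPochInfR Q Q := by
  have hE := (poch_pos h1 h0 h1).ne'
  rw [jtp_aux hz h0 h1, tsum_mul_left, TH]
  field_simp

/-! ### Theta identities of level ten -/

lemma TH_symm' {z w Q : ℝ} (hz : z ≠ 0) (hQ : Q ≠ 0) (h : z * w = Q) : TH w Q = TH z Q := by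
  rw [← TH_symm hz hQ, ← h, mul_div_cancel_left₀ _ hz]

lemma TH_shift' {z w Q : ℝ} (hz : z ≠ 0) (hQ : Q ≠ 0) (h : Q * z = w) : TH w Q = TH z Q / z := by
  rw [← TH_shift hz hQ, ← h, mul_div_cancel_left₀ _ hz]

section
variable {q : ℝ} (h0 : 0 < q) (h1 : q < 1)
include h0 h1

lemma qpow_pos (n : ℕ) : 0 < q ^ n := pow_pos h0 n
lemma qpow_lt (n : ℕ) (hn : n ≠ 0) : q ^ n < 1 := pow_lt_one₀ h0.le h1 hn

lemma theta_K (s : ℝ) (hs : s = 1 ∨ s = -1) :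
    TH (-q ^ 3) (q ^ 10) * TH (-q ^ 4) (q ^ 10) + s * (q * (TH (-q) (q ^ 10) * TH (-q ^ 2) (q ^ 10)))
      = TH (s * q) (q ^ 5) * TH (-s * q ^ 2) (q ^ 5) := by
  have hq := h0.ne'
  have hQ : (q ^ 20) ≠ 0 := by positivity
  have hs0 : s ≠ 0 := by rcases hs with rfl | rfl <;> norm_num
  have hs2 : s ^ 2 = 1 := by rcases hs with rfl | rfl <;> norm_num
  have a10 := qpow_pos h0 h1 10
  have b10 := qpow_lt h0 h1 10 (by norm_num)
  have a5 := qpow_pos h0 h1 5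
  have b5 := qpow_lt h0 h1 5 (by norm_num)
  rw [TH_L1 (neg_ne_zero.2 (pow_ne_zero 3 hq)) (neg_ne_zero.2 (pow_ne_zero 4 hq)) a10 b10,
    TH_L1 (neg_ne_zero.2 hq) (neg_ne_zero.2 (pow_ne_zero 2 hq)) a10 b10,
    TH_L2 (z := s * q) (mul_ne_zero hs0 hq) a5 b5,
    TH_L2 (z := -s * q ^ 2) (mul_ne_zero (neg_ne_zero.2 hs0) (pow_ne_zero 2 hq)) a5 b5]
  have e1 : (q ^ 10) ^ 2 = q ^ 20 := by ring
  have e2 : (q ^ 5) ^ 4 = q ^ 20 := by ring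
  have e3 : -q ^ 3 * -q ^ 4 = q ^ 7 := by ring
  have e4 : q ^ 10 * -q ^ 3 / -q ^ 4 = q ^ 9 := by field_simp
  have e5 : q ^ 10 * (-q ^ 3 * -q ^ 4) = q ^ 17 := by ring
  have e6 : q ^ 20 * -q ^ 3 / -q ^ 4 = q ^ 19 := by field_simp
  have e7 : -q * -q ^ 2 = q ^ 3 := by ring
  have e8 : q ^ 10 * -q / -q ^ 2 = q ^ 9 := by field_simp
  have e9 : q ^ 10 * (-q * -q ^ 2) = q ^ 13 := by ring
  have e10 : q ^ 20 * -q / -q ^ 2 = q ^ 19 := by field_simp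
  have e11 : q ^ 5 * (s * q) ^ 2 = q ^ 7 := by rw [mul_pow, hs2]; ring
  have e12 : (q ^ 5) ^ 3 * (s * q) ^ 2 = q ^ 17 := by rw [mul_pow, hs2]; ring
  have e13 : q ^ 5 * (-s * q ^ 2) ^ 2 = q ^ 9 := by rw [mul_pow, neg_sq, hs2]; ring
  have e14 : (q ^ 5) ^ 3 * (-s * q ^ 2) ^ 2 = q ^ 19 := by rw [mul_pow, neg_sq, hs2]; ring
  rw [e1, e2, e5, e9, e3, e4, e6, e7, e8, e10, e11, e12, e13, e14]
  rw [TH_symm' (z := q ^ 7) (w := q ^ 13) (by positivity) hQ (by ring),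
    TH_symm' (z := q ^ 17) (w := q ^ 3) (by positivity) hQ (by ring)]
  linear_combination (q ^ 3 * TH (q ^ 17) (q ^ 20) * TH (q ^ 19) (q ^ 20)) * hs2

lemma theta_T3 : TH 1 q ^ 2 - q * TH 1 (q ^ 5) ^ 2 = 4 * (TH q (q ^ 5) * TH (q ^ 2) (q ^ 5)) := by
  have hq := h0.ne'
  have hQ : (q ^ 5) ≠ 0 := by positivity
  have h := TH_L3 (z := 1) (w := 1) one_ne_zero one_ne_zero h0 h1
  rw [Fin.sum_univ_five] at h
  simp only [Fin.val_zero, Fin.val_one, Fin.val_two, show ((3 : Fin 5) : ℕ) = 3 from rfl,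
    show ((4 : Fin 5) : ℕ) = 4 from rfl] at h
  rw [show triZ ((0 : ℕ) : ℤ) = (0 : ℕ) from rfl, show triZ ((1 : ℕ) : ℤ) = (0 : ℕ) from rfl,
    show triZ ((2 : ℕ) : ℤ) = (1 : ℕ) from rfl, show triZ ((3 : ℕ) : ℤ) = (3 : ℕ) from rfl,
    show triZ ((4 : ℕ) : ℤ) = (6 : ℕ) from rfl] at h
  simp only [zpow_natCast, one_pow, mul_one, div_one] at h
  norm_num at h
  have g3 : TH (q ^ 3) (q ^ 5) = TH (q ^ 2) (q ^ 5) := TH_symm' (by positivity) hQ (by ring)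
  have g4 : TH (q ^ 4) (q ^ 5) = TH q (q ^ 5) := TH_symm' (by positivity) hQ (by ring)
  have g5 : TH (q ^ 5) (q ^ 5) = TH 1 (q ^ 5) := TH_symm' one_ne_zero hQ (by ring)
  have g6 : TH (q ^ 6) (q ^ 5) = TH q (q ^ 5) / q := TH_shift' hq hQ (by ring)
  have g8 : TH (q ^ 8) (q ^ 5) = TH (q ^ 3) (q ^ 5) / q ^ 3 :=
    TH_shift' (by positivity) hQ (by ring)
  have g10 : TH (q ^ 10) (q ^ 5) = TH (q ^ 5) (q ^ 5) / q ^ 5 :=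
    TH_shift' (by positivity) hQ (by ring)
  rw [g10, g8, g6, g5, g4, g3] at h
  field_simp at h
  linear_combination h

lemma theta_T4 : TH (-q) (q ^ 2) ^ 2 - TH (-q ^ 5) (q ^ 10) ^ 2
    = -4 * q * (TH (-q) (q ^ 10) * TH (-q ^ 3) (q ^ 10)) := by
  have hq := h0.ne'
  have hnq := neg_ne_zero.2 hq
  have hQ : (q ^ 10) ≠ 0 := by positivity
  have hn : ∀ n : ℕ, -q ^ n ≠ 0 := fun n => neg_ne_zero.2 (pow_ne_zero n hq)
  have h := TH_L3 (z := -q) (w := -q) hnq hnq (qpow_pos h0 h1 2) (qpow_lt h0 h1 2 (by norm_num))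
  rw [Fin.sum_univ_five] at h
  simp only [Fin.val_zero, Fin.val_one, Fin.val_two, show ((3 : Fin 5) : ℕ) = 3 from rfl,
    show ((4 : Fin 5) : ℕ) = 4 from rfl] at h
  rw [show triZ ((0 : ℕ) : ℤ) = (0 : ℕ) from rfl, show triZ ((1 : ℕ) : ℤ) = (0 : ℕ) from rfl,
    show triZ ((2 : ℕ) : ℤ) = (1 : ℕ) from rfl, show triZ ((3 : ℕ) : ℤ) = (3 : ℕ) from rfl,
    show triZ ((4 : ℕ) : ℤ) = (6 : ℕ) from rfl] at h
  have e : ∀ c : ℕ, (q ^ 2) ^ (2 + 2 * c) * (-q) ^ 2 / -q = -q ^ (5 + 4 * c) := by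
    intro c; field_simp; ring
  have e' : ∀ c : ℕ, (q ^ 2) ^ (1 + c) * -q * (-q) ^ 2 = -q ^ (5 + 2 * c) := by
    intro c; ring
  simp only [zpow_natCast, e, e'] at h
  norm_num at h
  rw [show (q ^ 2) ^ 5 = q ^ 10 by ring] at h
  have g7 : TH (-q ^ 7) (q ^ 10) = TH (-q ^ 3) (q ^ 10) := TH_symm' (hn 3) hQ (by ring)
  have g9 : TH (-q ^ 9) (q ^ 10) = TH (-q) (q ^ 10) := TH_symm' hnq hQ (by ring)
  have g11 : TH (-q ^ 11) (q ^ 10) = TH (-q) (q ^ 10) / -q := TH_shift' hnq hQ (by ring)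
  have g13 : TH (-q ^ 13) (q ^ 10) = TH (-q ^ 3) (q ^ 10) / -q ^ 3 := TH_shift' (hn 3) hQ (by ring)
  have g17 : TH (-q ^ 17) (q ^ 10) = TH (-q ^ 7) (q ^ 10) / -q ^ 7 := TH_shift' (hn 7) hQ (by ring)
  have g21 : TH (-q ^ 21) (q ^ 10) = TH (-q ^ 11) (q ^ 10) / -q ^ 11 :=
    TH_shift' (hn 11) hQ (by ring)
  rw [g21, g17, g13, g11, g9, g7] at h
  have e3 : (q ^ 2) ^ 3 * (-q) ^ 3 * (TH (-q ^ 3) (q ^ 10) / -q ^ 7 * (TH (-q) (q ^ 10) / -q))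
    = -q * (TH (-q) (q ^ 10) * TH (-q ^ 3) (q ^ 10)) := by field_simp
  have e2 : q ^ 2 * q ^ 2 * (TH (-q ^ 3) (q ^ 10) / -q ^ 3 * TH (-q) (q ^ 10))
    = -q * (TH (-q) (q ^ 10) * TH (-q ^ 3) (q ^ 10)) := by field_simp
  have e4 : (q ^ 2) ^ 6 * q ^ 4 * (TH (-q) (q ^ 10) / -q / -q ^ 11 * (TH (-q ^ 3) (q ^ 10) / -q ^ 3))
    = -q * (TH (-q) (q ^ 10) * TH (-q ^ 3) (q ^ 10)) := by field_simp
  have e4' : (-q) ^ 4 = q ^ 4 := by ring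
  try rw [e4'] at h
  try rw [e3, e2, e4] at h
  linear_combination h

/-! products -/

lemma phi_prod : TH (-q) (q ^ 2) * qPochInfR (q ^ 2) (q ^ 2) = qPochInfR q q ^ 2 := by
  rw [jtp (neg_ne_zero.2 h0.ne') (qpow_pos h0 h1 2) (qpow_lt h0 h1 2 (by norm_num)),
    poch_split2 q h0 h1, neg_neg, show -(q ^ 2 / -q) = q by field_simp, ← pow_two q]
  ring

lemma psi_prod : TH 1 q * qPochInfR q q = 2 * qPochInfR (q ^ 2) (q ^ 2) ^ 2 := by
  rw [jtp one_ne_zero h0 h1, poch_succ (-1) h0 h1, ← poch_mul_neg q h0 h1,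
    show -1 * q = -q by ring, div_one]
  ring

lemma split_q5 : qPochInfR q q = qPochInfR q (q ^ 5) * qPochInfR (q ^ 2) (q ^ 5) *
    qPochInfR (q ^ 3) (q ^ 5) * qPochInfR (q ^ 4) (q ^ 5) * qPochInfR (q ^ 5) (q ^ 5) := by
  rw [poch_split5 q h0 h1, show q * q = q ^ 2 by ring, show q * q ^ 2 = q ^ 3 by ring,
    show q * q ^ 3 = q ^ 4 by ring, show q * q ^ 4 = q ^ 5 by ring]

lemma split_10 (i : ℕ) : qPochInfR (q ^ i) (q ^ 5)
    = qPochInfR (q ^ i) (q ^ 10) * qPochInfR (q ^ (i + 5)) (q ^ 10) := by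
  rw [poch_split2 (q ^ i) (qpow_pos h0 h1 5) (qpow_lt h0 h1 5 (by norm_num)), ← pow_add, ← pow_mul]

lemma split_neg (i : ℕ) : qPochInfR (q ^ i) (q ^ 5) * qPochInfR (-q ^ i) (q ^ 5)
    = qPochInfR (q ^ (2 * i)) (q ^ 10) := by
  rw [poch_mul_neg (q ^ i) (qpow_pos h0 h1 5) (qpow_lt h0 h1 5 (by norm_num)), ← pow_mul, ← pow_mul,
    mul_comm i 2]

lemma TH_neg10 (i j : ℕ) (hij : i + j = 10) : TH (-q ^ i) (q ^ 10)
    = qPochInfR (q ^ i) (q ^ 10) * qPochInfR (q ^ j) (q ^ 10) * qPochInfR (q ^ 10) (q ^ 10) := by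
  rw [jtp (neg_ne_zero.2 (pow_ne_zero i h0.ne')) (qpow_pos h0 h1 10) (qpow_lt h0 h1 10 (by norm_num)),
    neg_neg]
  have : -(q ^ 10 / -q ^ i) = q ^ j := by
    rw [← hij, pow_add]
    have := pow_ne_zero i h0.ne'
    field_simp
  rw [this]

lemma TH_neg5 (i j : ℕ) (hij : i + j = 5) : TH (-q ^ i) (q ^ 5)
    = qPochInfR (q ^ i) (q ^ 5) * qPochInfR (q ^ j) (q ^ 5) * qPochInfR (q ^ 5) (q ^ 5) := by
  rw [jtp (neg_ne_zero.2 (pow_ne_zero i h0.ne')) (qpow_pos h0 h1 5) (qpow_lt h0 h1 5 (by norm_num)),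
    neg_neg]
  have : -(q ^ 5 / -q ^ i) = q ^ j := by
    rw [← hij, pow_add]
    have := pow_ne_zero i h0.ne'
    field_simp
  rw [this]

lemma TH_pos5 (i j : ℕ) (hij : i + j = 5) : TH (q ^ i) (q ^ 5)
    = qPochInfR (-q ^ i) (q ^ 5) * qPochInfR (-q ^ j) (q ^ 5) * qPochInfR (q ^ 5) (q ^ 5) := by
  rw [jtp (pow_ne_zero i h0.ne') (qpow_pos h0 h1 5) (qpow_lt h0 h1 5 (by norm_num))]
  have : q ^ 5 / q ^ i = q ^ j := by
    rw [← hij, pow_add]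
    have := pow_ne_zero i h0.ne'
    field_simp
  rw [this]

end

/-! ### The parameter `k` -/

/-- Pure algebra behind the `k`-parametrisation. -/
lemma k_algebra {q a b c d p k : ℝ} (hq : 0 < q) (ha : 0 < a) (hb : 0 < b) (hc : 0 < c) (hd : 0 < d)
    (hp : 0 < p) (hk : k * (c * d) = q * (a * b))
    (K1 : a * d * (c * d + q * a * b) = b ^ 2 * c * p ^ 2)
    (K2 : b * c * (c * d - q * a * b) = a * d ^ 2 * p ^ 2)
    (T3 : b ^ 2 * d ^ 2 - q * a ^ 2 * c ^ 2 = p ^ 4 * (a * c))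
    (T4 : a ^ 4 * b ^ 2 * c ^ 4 * d ^ 2 * p ^ 4 = p ^ 4 - 4 * q * (a * c)) :
    (1 - k) / (1 + k) = a ^ 2 * d ^ 3 / (b ^ 3 * c ^ 2) ∧ 0 < k ∧
    64 * k * (1 + k - k ^ 2) ^ 5 / ((1 + k ^ 2) ^ 2 * ((1 + 11 * k - k ^ 2) ^ 2 - 125 * k ^ 2) ^ 2)
      = 64 * q / (64 * q + p ^ 24 * (a * c) ^ 24) := by
  have hkv : k = q * (a * b) / (c * d) := by field_simp; linear_combination hk
  have kpos : 0 < k := by rw [hkv]; positivity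
  have e1 : 1 + k = b ^ 2 * p ^ 2 / (a * d ^ 2) := by
    rw [hkv]; field_simp; linear_combination K1
  have e2 : 1 - k = a * d * p ^ 2 / (b * c ^ 2) := by
    rw [hkv]; field_simp; linear_combination K2
  have h1 : 1 - k ^ 2 = k * (p ^ 4 / (q * (a * c))) := by
    rw [show 1 - k ^ 2 = (1 + k) * (1 - k) by ring, e1, e2, hkv]; field_simp
  have h2 : 1 + k - k ^ 2 = k * (b ^ 2 * d ^ 2 / (q * (a * c) ^ 2)) := by
    rw [show 1 + k - k ^ 2 = (1 - k ^ 2) + k by ring, h1]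
    field_simp; linear_combination -T3
  have h3 : 1 - 4 * k - k ^ 2 = k * ((a * c) ^ 3 * (b * d) ^ 2 * p ^ 4 / q) := by
    rw [show 1 - 4 * k - k ^ 2 = (1 - k ^ 2) - 4 * k by ring, h1]
    field_simp; linear_combination -T4
  refine ⟨?_, kpos, ?_⟩
  · rw [e1, e2]; field_simp
  · have hpoly : (1 + k ^ 2) ^ 2 * ((1 + 11 * k - k ^ 2) ^ 2 - 125 * k ^ 2) ^ 2
        = 64 * k * (1 + k - k ^ 2) ^ 5 + (1 - k ^ 2) * (1 - 4 * k - k ^ 2) ^ 5 := by ring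
    rw [hpoly, h2, h3, h1]
    have : (0:ℝ) < p ^ 24 * (a * c) ^ 24 := by positivity
    have n1 : 64 * k * (k * (b ^ 2 * d ^ 2 / (q * (a * c) ^ 2))) ^ 5
      = (64 * q) * (k ^ 6 * (b * d) ^ 10 / (q ^ 6 * (a * c) ^ 10)) := by field_simp
    have n2 : k * (p ^ 4 / (q * (a * c))) * (k * ((a * c) ^ 3 * (b * d) ^ 2 * p ^ 4 / q)) ^ 5
      = (p ^ 24 * (a * c) ^ 24) * (k ^ 6 * (b * d) ^ 10 / (q ^ 6 * (a * c) ^ 10)) := by field_simp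
    rw [n1, n2, ← add_mul]
    exact mul_div_mul_right _ _ (by positivity)

lemma k_main {q : ℝ} (h0 : 0 < q) (h1 : q < 1) :
    Rq q ^ 5 = (Rq q * Rq (q ^ 2) ^ 2) * (1 - Rq q * Rq (q ^ 2) ^ 2) ^ 2
          / (1 + Rq q * Rq (q ^ 2) ^ 2) ^ 2 ∧
    64 * (Rq q * Rq (q ^ 2) ^ 2)
            * (1 + (Rq q * Rq (q ^ 2) ^ 2) - (Rq q * Rq (q ^ 2) ^ 2) ^ 2) ^ 5
            / ((1 + (Rq q * Rq (q ^ 2) ^ 2) ^ 2) ^ 2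
              * ((1 + 11 * (Rq q * Rq (q ^ 2) ^ 2)
                  - (Rq q * Rq (q ^ 2) ^ 2) ^ 2) ^ 2
                - 125 * (Rq q * Rq (q ^ 2) ^ 2) ^ 2) ^ 2)
      = q * TH 1 q ^ 8 / (q * TH 1 q ^ 8 + 4 * TH (-q) (q ^ 2) ^ 8) := by
  have hpos : ∀ i : ℕ, i ≠ 0 → 0 < qPochInfR (q ^ i) (q ^ 10) := fun i hi =>
    poch_pos (qpow_lt h0 h1 i hi) (qpow_pos h0 h1 10) (qpow_lt h0 h1 10 (by norm_num))
  have hpos5 : ∀ i : ℕ, i ≠ 0 → 0 < qPochInfR (q ^ i) (q ^ 5) := fun i hi =>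
    poch_pos (qpow_lt h0 h1 i hi) (qpow_pos h0 h1 5) (qpow_lt h0 h1 5 (by norm_num))
  have n1 := split_neg h0 h1 1
  have n2 := split_neg h0 h1 2
  have n3 := split_neg h0 h1 3
  have n4 := split_neg h0 h1 4
  have s1 := split_10 h0 h1 1
  have s2 := split_10 h0 h1 2
  have s3 := split_10 h0 h1 3
  have s4 := split_10 h0 h1 4
  have s5 := split_10 h0 h1 5
  have sE1 := split_q5 h0 h1
  have sE2 := split_q5 (qpow_pos h0 h1 2) (qpow_lt h0 h1 2 (by norm_num))
  have P1 := phi_prod h0 h1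
  have P2 := psi_prod h0 h1
  have P5 := phi_prod (qpow_pos h0 h1 5) (qpow_lt h0 h1 5 (by norm_num))
  have P6 := psi_prod (qpow_pos h0 h1 5) (qpow_lt h0 h1 5 (by norm_num))
  have KA := theta_K h0 h1 1 (Or.inl rfl)
  have KB := theta_K h0 h1 (-1) (Or.inr rfl)
  have T3 := theta_T3 h0 h1
  have T4 := theta_T4 h0 h1
  have t3 := TH_neg10 h0 h1 3 7 rfl
  have t4 := TH_neg10 h0 h1 4 6 rfl
  have t1 := TH_neg10 h0 h1 1 9 rfl
  have t2 := TH_neg10 h0 h1 2 8 rfl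
  have u1 := TH_neg5 h0 h1 1 4 rfl
  have u2 := TH_neg5 h0 h1 2 3 rfl
  have v1 := TH_pos5 h0 h1 1 4 rfl
  have v2 := TH_pos5 h0 h1 2 3 rfl
  have q1 := hpos 1 (by norm_num)
  have q2 := hpos 2 (by norm_num)
  have q3 := hpos 3 (by norm_num)
  have q4 := hpos 4 (by norm_num)
  have q5 := hpos 5 (by norm_num)
  have q6 := hpos 6 (by norm_num)
  have q7 := hpos 7 (by norm_num)
  have q8 := hpos 8 (by norm_num)
  have q9 := hpos 9 (by norm_num)
  have q10 := hpos 10 (by norm_num)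
  simp only [← pow_mul, pow_one, Nat.reduceMul, Nat.reduceAdd, one_mul, neg_mul, neg_neg, mul_one] at *
  -- names
  have R1 : Rq q = q ^ ((1:ℝ) / 5) * qPochInfR q (q ^ 5) * qPochInfR (q ^ 4) (q ^ 5)
    / (qPochInfR (q ^ 2) (q ^ 5) * qPochInfR (q ^ 3) (q ^ 5)) := rfl
  have R2 : Rq (q ^ 2) = (q ^ 2) ^ ((1:ℝ) / 5) * qPochInfR (q ^ 2) (q ^ 10) * qPochInfR (q ^ 8) (q ^ 10)
    / (qPochInfR (q ^ 4) (q ^ 10) * qPochInfR (q ^ 6) (q ^ 10)) := by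
    unfold Rq; simp only [← pow_mul, Nat.reduceMul]
  obtain ⟨r, hr, hr0⟩ : ∃ r : ℝ, q ^ ((1:ℝ) / 5) = r ∧ 0 < r := ⟨_, rfl, by positivity⟩
  have hr5 : r ^ 5 = q := by
    rw [← hr, ← Real.rpow_natCast, ← Real.rpow_mul h0.le]; norm_num
  have hr2 : (q ^ 2) ^ ((1:ℝ) / 5) = r ^ 2 := by
    rw [← hr5, ← pow_mul, mul_comm, pow_mul, ← Real.rpow_natCast, ← Real.rpow_mul (by positivity)]
    norm_num
  rw [hr] at R1
  rw [hr2] at R2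
  generalize qPochInfR q (q ^ 10) = p1 at *
  generalize qPochInfR (q ^ 2) (q ^ 10) = p2 at *
  generalize qPochInfR (q ^ 3) (q ^ 10) = p3 at *
  generalize qPochInfR (q ^ 4) (q ^ 10) = p4 at *
  generalize qPochInfR (q ^ 5) (q ^ 10) = p5 at *
  generalize qPochInfR (q ^ 6) (q ^ 10) = p6 at *
  generalize qPochInfR (q ^ 7) (q ^ 10) = p7 at *
  generalize qPochInfR (q ^ 8) (q ^ 10) = p8 at *
  generalize qPochInfR (q ^ 9) (q ^ 10) = p9 at *
  generalize qPochInfR (q ^ 10) (q ^ 10) = e at *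
  rw [s5] at sE1 P5 P6 u1 u2 v1 v2
  rw [s1] at R1 n1 sE1 u1
  rw [s2] at R1 n2 sE1 u2
  rw [s3] at R1 n3 sE1 u2
  rw [s4] at R1 n4 sE1 u1
  rw [t1, t2, t3, t4] at KA KB
  rw [v1, u2] at KA
  rw [u1, v2] at KB
  rw [v1, v2] at T3
  rw [t1, t3] at T4
  generalize qPochInfR (-q) (q ^ 5) = m1 at *
  generalize qPochInfR (-q ^ 2) (q ^ 5) = m2 at *
  generalize qPochInfR (-q ^ 3) (q ^ 5) = m3 at *
  generalize qPochInfR (-q ^ 4) (q ^ 5) = m4 at *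
  generalize qPochInfR q q = E1 at *
  generalize qPochInfR (q ^ 2) (q ^ 2) = E2 at *
  generalize TH 1 q = A at *
  generalize TH (-q) (q ^ 2) = B at *
  generalize TH 1 (q ^ 5) = A5 at *
  generalize TH (-q ^ 5) (q ^ 10) = B5 at *
  subst sE1 sE2
  have fm1 : m1 = p2 / (p1 * p6) := by field_simp; linear_combination n1
  have fm2 : m2 = p4 / (p2 * p7) := by field_simp; linear_combination n2
  have fm3 : m3 = p6 / (p3 * p8) := by field_simp; linear_combination n3
  have fm4 : m4 = p8 / (p4 * p9) := by field_simp; linear_combination n4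
  have fA : A = 2 * (p2 * p8 * p4 * p6) * e / (p1 * p9 * p3 * p7 * p5) := by
    have : 0 < p1 * p6 * (p2 * p7) * (p3 * p8) * (p4 * p9) * (p5 * e) := by positivity
    rw [← eq_div_iff this.ne'] at P2; rw [P2]; field_simp
  have fB : B = (p1 * p9 * (p3 * p7)) ^ 2 * (p2 * p8 * (p4 * p6)) * p5 ^ 2 * e := by
    have : 0 < p2 * p4 * p6 * p8 * e := by positivity
    rw [← eq_div_iff this.ne'] at P1; rw [P1]; field_simp
  have fA5 : A5 = 2 * e / p5 := by
    have : 0 < p5 * e := by positivity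
    rw [← eq_div_iff this.ne'] at P6; rw [P6]; field_simp
  have fB5 : B5 = p5 ^ 2 * e := by
    rw [← eq_div_iff q10.ne'] at P5; rw [P5]; field_simp
  clear n1 n2 n3 n4 P1 P2 P5 P6 s1 s2 s3 s4 s5 t1 t2 t3 t4 u1 u2 v1 v2
  rw [fm1, fm4] at KA
  rw [fm2, fm3] at KB
  rw [fm1, fm2, fm3, fm4, fA, fA5] at T3
  rw [fB, fB5] at T4
  obtain ⟨k, hk⟩ : ∃ k, k = Rq q * Rq (q ^ 2) ^ 2 := ⟨_, rfl⟩
  rw [← hk]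
  have main := k_algebra (q := q) (a := p1 * p9) (b := p2 * p8) (c := p3 * p7) (d := p4 * p6)
    (p := p5) (k := k) h0 (by positivity) (by positivity) (by positivity) (by positivity) q5
    (by rw [hk, R1, R2, ← hr5]; field_simp)
    (by
      have hx : 0 < e ^ 2 := by positivity
      apply mul_right_cancel₀ hx.ne'
      field_simp at KA
      linear_combination e ^ 2 * KA)
    (by
      have hx : 0 < e ^ 2 := by positivity
      apply mul_right_cancel₀ hx.ne'
      field_simp at KB
      linear_combination e ^ 2 * KB)
    (by
      field_simp at T3
      linear_combination T3 / 4)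
    (by
      have hx : 0 < e ^ 2 := by positivity
      apply mul_right_cancel₀ hx.ne'
      field_simp at T4
      linear_combination e ^ 2 * T4)
  obtain ⟨M1, kpos, M2⟩ := main
  constructor
  · have : k * (1 - k) ^ 2 / (1 + k) ^ 2 = k * ((1 - k) / (1 + k)) ^ 2 := by
      rw [div_pow]; ring
    rw [this, M1, hk, R1, R2]
    field_simp
  · rw [M2, fA, fB]
    have hx : 0 < q * (2 * (p2 * p8 * p4 * p6) * e / (p1 * p9 * p3 * p7 * p5)) ^ 8 +
        4 * ((p1 * p9 * (p3 * p7)) ^ 2 * (p2 * p8 * (p4 * p6)) * p5 ^ 2 * e) ^ 8 := by positivity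
    have hy : 0 < 64 * q + p5 ^ 24 * (p1 * p9 * (p3 * p7)) ^ 24 := by positivity
    rw [div_eq_div_iff hy.ne' hx.ne']
    field_simp
    ring

/-! ### The hypergeometric function `₂F₁(1/4,3/4;1;·)` and its quadratic transformation -/

lemma ps_summable {a : ℕ → ℝ} {j : ℕ} (ha : ∀ n, |a n| ≤ ((n : ℝ) + 1) ^ j) {x : ℝ} (hx : |x| < 1) :
    Summable (fun n => a n * x ^ n) := by
  have h := summable_pow_mul_geometric_of_norm_lt_one (R := ℝ) j (r := |x|) (by simpa using hx)
  have h' : Summable (fun n : ℕ => ((n : ℝ) + 1) ^ j * |x| ^ n) := by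
    rcases eq_or_ne x 0 with rfl | hx0
    · refine summable_of_ne_finset_zero (s := {0}) ?_
      intro b hb
      have : b ≠ 0 := by simpa using hb
      simp [this]
    · have h2 := ((summable_nat_add_iff 1).2 h).mul_left (|x|⁻¹)
      refine h2.congr fun n => ?_
      have : |x| ≠ 0 := by positivity
      push_cast
      field_simp
      ring
  refine Summable.of_norm_bounded h' fun n => ?_
  rw [Real.norm_eq_abs, abs_mul, abs_pow]
  exact mul_le_mul_of_nonneg_right (ha n) (by positivity)

lemma ps_deriv {a : ℕ → ℝ} {j : ℕ} (ha : ∀ n, |a n| ≤ ((n : ℝ) + 1) ^ j) {x : ℝ} (hx : |x| < 1) :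
    HasDerivAt (fun x => ∑' n, a n * x ^ n) (∑' n : ℕ, ((n : ℝ) + 1) * a (n + 1) * x ^ n) x := by
  obtain ⟨r, hr1, hr2⟩ := exists_between hx
  have hr0 : 0 < r := (abs_nonneg x).trans_lt hr1
  have hb : ∀ n, |(fun n : ℕ => (n : ℝ) * a n / r) n * r| ≤ ((n : ℝ) + 1) ^ (j + 1) := by
    intro n
    simp only
    rw [div_mul_cancel₀ _ hr0.ne', abs_mul, pow_succ, mul_comm]
    have : |(n : ℝ)| = n := abs_of_nonneg (by positivity)
    rw [this]
    exact mul_le_mul (ha n) (by linarith) (by positivity) (by positivity)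
  have hs : Summable (fun n : ℕ => |(n : ℝ) * a n| * r ^ (n - 1)) := by
    have := (ps_summable (a := fun n => |(n : ℝ) * a n|) (j := j + 1) (x := r) (fun n => by
      have := hb n
      simp only at this
      rw [div_mul_cancel₀ _ hr0.ne'] at this
      simpa using this) (by rw [abs_of_pos hr0]; exact hr2)).mul_left (r⁻¹)
    refine this.congr fun n => ?_
    rcases n with _ | n
    · simp
    · simp only [Nat.add_sub_cancel]; field_simp; ring
  have hd := hasDerivAt_tsum_of_isPreconnected (𝕜 := ℝ) (g := fun n x => a n * x ^ n)
    (g' := fun n x => a n * (n * x ^ (n - 1))) (y₀ := x) (y := x) hs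
    (isOpen_Ioo (a := -r) (b := r)) isPreconnected_Ioo
    (fun n y _ => (hasDerivAt_pow n y).const_mul (a n))
    (fun n y hy => by
      rw [Real.norm_eq_abs, show a n * (n * y ^ (n - 1)) = (n * a n) * y ^ (n - 1) by ring, abs_mul,
        abs_pow]
      have : |y| ≤ r := (abs_lt.2 hy).le
      gcongr) (abs_lt.1 hr1) (ps_summable ha hx) (abs_lt.1 hr1)
  refine hd.congr_deriv ?_
  symm
  have hsum : Summable (fun n : ℕ => a n * ((n : ℝ) * x ^ (n - 1))) := by
    refine Summable.of_norm_bounded hs fun n => ?_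
    rw [Real.norm_eq_abs, show a n * (n * x ^ (n - 1)) = (n * a n) * x ^ (n - 1) by ring, abs_mul,
        abs_pow]
    gcongr
  rw [hsum.tsum_eq_zero_add]
  simp only [Nat.cast_zero, zero_mul, mul_zero, zero_add, Nat.add_sub_cancel]
  refine tsum_congr fun n => ?_
  push_cast; ring

/-- Coefficients of `₂F₁(1/4,3/4;1;·)`. -/
noncomputable def hc (n : ℕ) : ℝ :=
  risingFact (1/4) n * risingFact (3/4) n / (risingFact 1 n * n.factorial)

lemma risingFact_one (n : ℕ) : risingFact 1 n = n.factorial := by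
  induction n with
  | zero => simp [risingFact]
  | succ n ih =>
    rw [risingFact, Finset.prod_range_succ, ← risingFact, ih, Nat.factorial_succ]; push_cast; ring

lemma hc_zero : hc 0 = 1 := by simp [hc, risingFact]

lemma hc_succ (n : ℕ) : ((n:ℝ) + 1) ^ 2 * hc (n + 1) = (n + 1 / 4) * (n + 3 / 4) * hc n := by
  have h := Nat.cast_ne_zero (R := ℝ).2 (Nat.factorial_ne_zero n)
  unfold hc
  rw [risingFact_one, risingFact_one, Nat.factorial_succ]
  simp only [risingFact, Finset.prod_range_succ]
  push_cast
  field_simp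
  ring

lemma hc_bd (n : ℕ) : 0 ≤ hc n ∧ hc n ≤ 1 := by
  induction n with
  | zero => simp [hc_zero]
  | succ n ih =>
    have h := hc_succ n
    have hn : (0:ℝ) ≤ n := by positivity
    have e : hc (n + 1) = (n + 1 / 4) * (n + 3 / 4) * hc n / ((n:ℝ) + 1) ^ 2 := by
      rw [← h]; field_simp
    rw [e]
    refine ⟨by have := ih.1; positivity, ?_⟩
    rw [div_le_one (by positivity)]
    have : ((n:ℝ) + 1 / 4) * (n + 3 / 4) * hc n ≤ (n + 1 / 4) * (n + 3 / 4) * 1 := by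
      have := ih.2
      gcongr
    nlinarith

noncomputable def hF (x : ℝ) : ℝ := ∑' n, hc n * x ^ n
noncomputable def hD (x : ℝ) : ℝ := ∑' n : ℕ, ((n : ℝ) + 1) * hc (n + 1) * x ^ n

lemma hyp_eq_hF (x : ℝ) : hyp2F1 (1/4) (3/4) 1 x = hF x := rfl

lemma hc_abs (n : ℕ) : |hc n| ≤ ((n : ℝ) + 1) ^ 0 := by
  rw [abs_of_nonneg (hc_bd n).1]; simpa using (hc_bd n).2

lemma hF_deriv {x : ℝ} (hx : |x| < 1) : HasDerivAt hF (hD x) x := ps_deriv hc_abs hx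

lemma hF_zero : hF 0 = 1 := by
  unfold hF
  rw [tsum_eq_single 0 (fun n hn => by simp [hn])]; simp [hc_zero]

lemma hF_ge {x : ℝ} (h0 : 0 ≤ x) (h1 : x < 1) : 1 ≤ hF x := by
  have hs := ps_summable hc_abs (x := x) (by rw [abs_of_nonneg h0]; exact h1)
  have := hs.le_tsum 0 (fun n _ => mul_nonneg (hc_bd n).1 (by positivity))
  simpa [hc_zero, hF] using this

noncomputable def gc : ℕ → ℝ
  | 0 => 0
  | n + 1 => 3 / 16 * hc n / (n + 1)

noncomputable def hG (x : ℝ) : ℝ := ∑' n, gc n * x ^ n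

lemma gc_abs (n : ℕ) : |gc n| ≤ ((n : ℝ) + 1) ^ 0 := by
  rcases n with _ | n
  · simp [gc]
  · have := hc_bd n
    rw [gc, pow_zero, abs_of_nonneg (by have := this.1; positivity), div_le_one (by positivity)]
    have hn : (0:ℝ) ≤ n := by positivity
    linarith [this.2]

lemma hG_deriv {x : ℝ} (hx : |x| < 1) : HasDerivAt hG (3 / 16 * hF x) x := by
  have := ps_deriv gc_abs hx
  refine this.congr_deriv ?_
  unfold hF
  rw [← tsum_mul_left]
  refine tsum_congr fun n => ?_
  rw [gc]; field_simp

lemma hG_zero : hG 0 = 0 := by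
  unfold hG
  rw [tsum_eq_single 0 (fun n hn => by simp [hn])]; simp [gc]

lemma hG_eq {x : ℝ} (hx : |x| < 1) : hG x = x * (1 - x) * hD x := by
  have s1 : Summable (fun n : ℕ => ((n : ℝ) + 1) * hc (n + 1) * x ^ n) := by
    refine ps_summable (a := fun n : ℕ => ((n : ℝ) + 1) * hc (n + 1)) (j := 1) (fun n => ?_) hx
    have := hc_bd (n + 1)
    rw [abs_of_nonneg (mul_nonneg (by positivity) this.1), pow_one]
    have hn : (0:ℝ) ≤ n := by positivity
    nlinarith [this.2]
  have s2 : Summable (fun n : ℕ => (n : ℝ) * hc n * x ^ n) := by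
    refine ps_summable (a := fun n : ℕ => (n : ℝ) * hc n) (j := 1) (fun n => ?_) hx
    have := hc_bd n
    rw [abs_of_nonneg (mul_nonneg (by positivity) this.1), pow_one]
    have hn : (0:ℝ) ≤ n := by positivity
    nlinarith [this.2]
  have e2 : x * hD x = ∑' n : ℕ, (n : ℝ) * hc n * x ^ n := by
    rw [s2.tsum_eq_zero_add, hD, ← tsum_mul_left]
    simp only [Nat.cast_zero, zero_mul, zero_add]
    refine tsum_congr fun n => ?_
    push_cast; ring
  have e3 : (1 - x) * hD x = ∑' n : ℕ, 3 / 16 * hc n / (n + 1) * x ^ n := by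
    rw [sub_mul, one_mul, e2, hD, ← s1.tsum_sub s2]
    refine tsum_congr fun n => ?_
    have h := hc_succ n
    have : ((n:ℝ) + 1) * hc (n + 1) = (n + 1 / 4) * (n + 3 / 4) * hc n / (n + 1) := by
      rw [← h]; field_simp
    rw [this]; field_simp; ring
  rw [mul_assoc, e3, hG, (ps_summable gc_abs hx).tsum_eq_zero_add, ← tsum_mul_left]
  simp only [gc, zero_mul, zero_add]
  refine tsum_congr fun n => ?_
  ring

section quad

noncomputable def qu (x : ℝ) : ℝ := 8 * x * (1 + x) / (1 + 3 * x) ^ 2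

lemma qu_lt {x : ℝ} (ha : -(1/100) < x) (hb : x < 1) : |qu x| < 1 := by
  have h3 : 0 < 1 + 3 * x := by linarith
  rw [abs_lt, qu]
  constructor
  · rw [lt_div_iff₀ (by positivity)]; nlinarith [sq_nonneg x]
  · rw [div_lt_one (by positivity)]; nlinarith [sq_nonneg (1 - x), sub_pos.2 hb]

lemma sq_lt {x : ℝ} (ha : -(1/100) < x) (hb : x < 1) : |x ^ 2| < 1 := by
  rw [abs_pow, sq_lt_one_iff_abs_lt_one, abs_abs, abs_lt]; constructor <;> linarith

lemma qu_deriv {x : ℝ} (ha : -(1/100) < x) :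
    HasDerivAt qu (8 * (1 - x) / (1 + 3 * x) ^ 3) x := by
  have h3 : 0 < 1 + 3 * x := by linarith
  have hl : HasDerivAt (fun x : ℝ => 1 + 3 * x) 3 x := by
    simpa using ((hasDerivAt_id x).const_mul 3).const_add 1
  have hn : HasDerivAt (fun x : ℝ => 8 * x * (1 + x)) (8 * (1 + x) + 8 * x) x := by
    have h1 : HasDerivAt (fun x : ℝ => 8 * x) 8 x := by simpa using (hasDerivAt_id x).const_mul 8
    have h2 : HasDerivAt (fun x : ℝ => 1 + x) 1 x := by simpa using (hasDerivAt_id x).const_add 1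
    exact (h1.mul h2).congr_deriv (by ring)
  have := hn.div (hl.pow 2) (by simp only [Pi.pow_apply]; positivity)
  refine this.congr_deriv ?_
  simp only [Pi.pow_apply]
  obtain ⟨w, hw⟩ : ∃ w, w = 1 + 3 * x := ⟨_, rfl⟩
  rw [← hw] at h3 ⊢
  have hx : x = (w - 1) / 3 := by linarith
  rw [hx]
  field_simp
  push_cast
  ring

noncomputable def qs (x : ℝ) : ℝ := Real.sqrt (1 + 3 * x)

lemma qs_pos {x : ℝ} (ha : -(1/100) < x) : 0 < qs x := Real.sqrt_pos.2 (by linarith)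
lemma qs_sq {x : ℝ} (ha : -(1/100) < x) : qs x ^ 2 = 1 + 3 * x := Real.sq_sqrt (by linarith)

lemma qs_deriv {x : ℝ} (ha : -(1/100) < x) : HasDerivAt qs (3 / (2 * qs x)) x := by
  have hl : HasDerivAt (fun x : ℝ => 1 + 3 * x) 3 x := by
    simpa using ((hasDerivAt_id x).const_mul 3).const_add 1
  exact hl.sqrt (by linarith)

noncomputable def Y1 (x : ℝ) : ℝ := hF (qu x) / qs x
noncomputable def Y1d (x : ℝ) : ℝ :=
  hD (qu x) * (8 * (1 - x) / (1 + 3 * x) ^ 3) / qs x - 3 / 2 * hF (qu x) / qs x ^ 3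
noncomputable def Z1 (x : ℝ) : ℝ :=
  qs x * hG (qu x) - 3 / 2 * (x * (1 - x ^ 2)) * hF (qu x) / qs x ^ 3
noncomputable def Y2 (x : ℝ) : ℝ := hF (x ^ 2)
noncomputable def Z2 (x : ℝ) : ℝ := 2 * hG (x ^ 2)

variable {x : ℝ} (ha : -(1/100) < x) (hb : x < 1)
include ha hb

lemma Y1_deriv : HasDerivAt Y1 (Y1d x) x := by
  have h1 := (hF_deriv (qu_lt ha hb)).comp x (qu_deriv ha)
  have hs := qs_pos ha
  have := h1.div (qs_deriv ha) hs.ne'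
  refine this.congr_deriv ?_
  simp only [Function.comp_apply, Y1d]
  field_simp

lemma Z1_eq : Z1 x = x * (1 - x ^ 2) * Y1d x := by
  have hs := qs_pos ha
  have h3 : 0 < 1 + 3 * x := by linarith
  rw [Z1, Y1d, hG_eq (qu_lt ha hb)]
  have e : 1 - qu x = (1 - x) ^ 2 / (1 + 3 * x) ^ 2 := by
      rw [qu, eq_div_iff (by positivity), sub_mul, div_mul_cancel₀ _ (by positivity)]; ring
  have e2 : qu x * (1 - qu x) = 8 * x * (1 + x) * (1 - x) ^ 2 / qs x ^ 8 := by
    rw [e, qu, show qs x ^ 8 = (qs x ^ 2) ^ 4 by ring, qs_sq ha]; field_simp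
  rw [e2, ← qs_sq ha]
  field_simp
  ring

lemma Z1_deriv : HasDerivAt Z1 (3 / 4 * x * Y1 x) x := by
  have hs := qs_pos ha
  have h1 := (hG_deriv (qu_lt ha hb)).comp x (qu_deriv ha)
  have h2 := (hF_deriv (qu_lt ha hb)).comp x (qu_deriv ha)
  have hs' := qs_deriv ha
  have hp : HasDerivAt (fun x : ℝ => 3 / 2 * (x * (1 - x ^ 2))) (3 / 2 * (1 - 3 * x ^ 2)) x := by
    have := ((hasDerivAt_id x).mul ((hasDerivAt_pow 2 x).const_sub 1)).const_mul (3 / 2)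
    refine this.congr_deriv ?_
    simp; ring
  have := (hs'.mul h1).sub ((hp.mul h2).div (hs'.pow 3) (by simp only [Pi.pow_apply]; positivity))
  refine this.congr_deriv ?_
  simp only [Function.comp_apply, Pi.mul_apply, Pi.pow_apply]
  have key : hG (qu x) * (1 + 3 * x) ^ 4 = 8 * x * (1 + x) * (1 - x) ^ 2 * hD (qu x) := by
    rw [hG_eq (qu_lt ha hb)]
    have h3 : 0 < 1 + 3 * x := by linarith
    have e : 1 - qu x = (1 - x) ^ 2 / (1 + 3 * x) ^ 2 := by
      rw [qu, eq_div_iff (by positivity), sub_mul, div_mul_cancel₀ _ (by positivity)]; ring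
    rw [e]
    generalize hD (qu x) = D
    rw [qu]
    generalize 1 + 3 * x = w at h3
    field_simp
  rw [Y1]
  rw [← qs_sq ha] at key ⊢
  generalize hG (qu x) = G at *
  generalize hD (qu x) = D at *
  generalize hF (qu x) = F at *
  have e2 := qs_sq ha
  have hx : x = (qs x ^ 2 - 1) / 3 := by linarith
  generalize qs x = s at *
  have hG' : G = 8 * x * (1 + x) * (1 - x) ^ 2 * D / s ^ 8 := by
    field_simp; linear_combination key
  rw [hG', hx]
  field_simp
  ring

omit ha hb in
lemma Y2_deriv' (h : |x ^ 2| < 1) : HasDerivAt Y2 (hD (x ^ 2) * (2 * x)) x := by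
  have := HasDerivAt.comp (h₂ := hF) (h := fun y => y ^ 2) x (hF_deriv h) (hasDerivAt_pow 2 x)
  exact this.congr_deriv (by simp)

omit ha hb in
lemma Z2_deriv' (h : |x ^ 2| < 1) : HasDerivAt Z2 (3 / 4 * x * Y2 x) x := by
  have := (HasDerivAt.comp (h₂ := hG) (h := fun y => y ^ 2) x (hG_deriv h) (hasDerivAt_pow 2 x)).const_mul 2
  refine this.congr_deriv ?_
  simp [Y2]; ring

lemma W_deriv : HasDerivAt (fun x => Y1 x * Z2 x - Y2 x * Z1 x) 0 x := by
  have hs := sq_lt ha hb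
  have := ((Y1_deriv ha hb).mul (Z2_deriv' hs)).sub ((Y2_deriv' hs).mul (Z1_deriv ha hb))
  refine this.congr_deriv ?_
  rw [Z1_eq ha hb, Z2, hG_eq hs]
  ring

lemma W_zero : Y1 x * Z2 x - Y2 x * Z1 x = 0 := by
  have hd : ∀ y ∈ Set.Ioo (-(1/100) : ℝ) 1,
      HasDerivAt (fun x => Y1 x * Z2 x - Y2 x * Z1 x) 0 y := fun y hy => W_deriv hy.1 hy.2
  have h := isOpen_Ioo.is_const_of_deriv_eq_zero (𝕜 := ℝ) (s := Set.Ioo (-(1/100) : ℝ) 1)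
    (f := fun x => Y1 x * Z2 x - Y2 x * Z1 x) isPreconnected_Ioo
    (fun y hy => (hd y hy).differentiableAt.differentiableWithinAt)
    (fun y hy => (hd y hy).deriv) (x := x) (y := 0) ⟨ha, hb⟩ ⟨by norm_num, by norm_num⟩
  refine h.trans ?_
  simp [Z1, Z2, qu, hG_zero]

end quad

lemma quad_transform {x : ℝ} (h0 : 0 ≤ x) (h1 : x < 1) :
    hF (8 * x * (1 + x) / (1 + 3 * x) ^ 2) = Real.sqrt (1 + 3 * x) * hF (x ^ 2) := by
  rcases h0.eq_or_lt with rfl | hx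
  · simp
  have hY2 : ∀ y ∈ Set.Icc 0 x, Y2 y ≠ 0 := fun y hy => by
    have := hF_ge (x := y ^ 2) (by positivity) (by nlinarith [hy.1, hy.2])
    exact (lt_of_lt_of_le one_pos this).ne'
  have hd : ∀ y ∈ Set.Icc 0 x, HasDerivAt (fun y => Y1 y / Y2 y)
      ((Y1d y * Y2 y - Y1 y * (hD (y ^ 2) * (2 * y))) / Y2 y ^ 2) y := fun y hy => by
    have a1 : -(1/100) < y := by linarith [hy.1]
    have a2 : y < 1 := by linarith [hy.2]
    exact (Y1_deriv a1 a2).div (Y2_deriv' (sq_lt a1 a2)) (hY2 y hy)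
  obtain ⟨c, hc1, hc2⟩ := exists_hasDerivAt_eq_slope (fun y => Y1 y / Y2 y) _ hx
    (fun y hy => (hd y hy).continuousAt.continuousWithinAt)
    (fun y hy => hd y ⟨hy.1.le, hy.2.le⟩)
  have a1 : -(1/100) < c := by linarith [hc1.1]
  have a2 : c < 1 := by linarith [hc1.2]
  have hw := W_zero a1 a2
  rw [Z1_eq a1 a2, Z2, hG_eq (sq_lt a1 a2)] at hw
  have hcp : 0 < c * (1 - c ^ 2) := mul_pos hc1.1 (by nlinarith [hc1.1])
  have hnum : Y1d c * Y2 c - Y1 c * (hD (c ^ 2) * (2 * c)) = 0 := by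
    apply mul_left_cancel₀ hcp.ne'
    linear_combination -hw
  rw [hnum, zero_div, eq_comm, div_eq_zero_iff] at hc2
  have h00 : Y1 0 / Y2 0 = 1 := by simp [Y1, Y2, qu, qs, hF_zero]
  rcases hc2 with hc2 | hc2
  · rw [h00, sub_eq_zero, div_eq_one_iff_eq (hY2 x ⟨h0, le_rfl⟩), Y1, Y2,
      div_eq_iff (qs_pos (by linarith)).ne'] at hc2
    rw [show 8 * x * (1 + x) / (1 + 3 * x) ^ 2 = qu x from rfl, hc2, qs]; ring
  · linarith

/-! ### Signature four inversion -/

section sig4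
variable {q : ℝ} (h0 : 0 < q) (h1 : q < 1)
include h0 h1

lemma TH_self : TH q q = TH 1 q := TH_symm' one_ne_zero h0.ne' (by ring)

lemma phi_sq : TH q (q ^ 2) ^ 2 = TH (q ^ 2) (q ^ 4) ^ 2 + q * TH 1 (q ^ 4) ^ 2 := by
  have h := TH_L1 (z := q) (w := q) h0.ne' h0.ne' (qpow_pos h0 h1 2) (qpow_lt h0 h1 2 (by norm_num))
  have hs := TH_self (qpow_pos h0 h1 4) (qpow_lt h0 h1 4 (by norm_num))
  rw [mul_div_cancel_right₀ _ h0.ne', mul_div_cancel_right₀ _ h0.ne', show (q ^ 2) ^ 2 = q ^ 4 by ring,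
    show q ^ 2 * (q * q) = q ^ 4 by ring, show q * q = q ^ 2 by ring, hs] at h
  linear_combination h

lemma phin_sq : TH (-q) (q ^ 2) ^ 2 = TH (q ^ 2) (q ^ 4) ^ 2 - q * TH 1 (q ^ 4) ^ 2 := by
  have hn := neg_ne_zero.2 h0.ne'
  have h := TH_L1 (z := -q) (w := -q) hn hn (qpow_pos h0 h1 2) (qpow_lt h0 h1 2 (by norm_num))
  have hs := TH_self (qpow_pos h0 h1 4) (qpow_lt h0 h1 4 (by norm_num))
  rw [mul_div_cancel_right₀ _ hn, mul_div_cancel_right₀ _ hn, show (q ^ 2) ^ 2 = q ^ 4 by ring,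
    show q ^ 2 * (-q * -q) = q ^ 4 by ring, show -q * -q = q ^ 2 by ring, hs] at h
  linear_combination h

lemma psi_sq : TH 1 q ^ 2 = 2 * (TH 1 (q ^ 2) * TH q (q ^ 2)) := by
  have h := TH_L1 (z := 1) (w := 1) one_ne_zero one_ne_zero h0 h1
  have hs := TH_self (qpow_pos h0 h1 2) (qpow_lt h0 h1 2 (by norm_num))
  simp only [mul_one, div_one, one_mul, hs] at h
  linear_combination h

omit h1 in
lemma thTerm_phi (n : ℤ) : thTerm q (q ^ 2) n = q ^ (n ^ 2) := by
  unfold thTerm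
  rw [← zpow_natCast, ← zpow_mul, ← zpow_add₀ h0.ne']
  congr 1
  have := two_triZ n
  push_cast
  linear_combination this

lemma phi_ge : 1 ≤ TH q (q ^ 2) := by
  have hs := summable_thTerm h0.ne' (qpow_pos h0 h1 2) (qpow_lt h0 h1 2 (by norm_num))
  have := hs.le_tsum 0 (fun n _ => by rw [thTerm_phi h0]; positivity)
  simpa [thTerm_phi h0, TH] using this

omit h1 in
lemma psi_nonneg : 0 ≤ TH 1 q := by
  refine tsum_nonneg fun n => ?_
  unfold thTerm; positivity

lemma phin_pos : 0 < TH (-q) (q ^ 2) := by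
  have h := phi_prod h0 h1
  have e1 := poch_pos h1 h0 h1
  have e2 := poch_pos (qpow_lt h0 h1 2 (by norm_num)) (qpow_pos h0 h1 2) (qpow_lt h0 h1 2 (by norm_num))
  rw [← eq_div_iff e2.ne'] at h
  rw [h]; positivity

end sig4

lemma triZ_nonneg (n : ℤ) : 0 ≤ triZ n := by
  have := two_triZ n
  rcases le_or_gt n 0 with h | h
  · nlinarith
  · nlinarith

lemma psi_mono {q r : ℝ} (h0 : 0 < q) (hqr : q ≤ r) (h1 : r < 1) : TH 1 q ≤ TH 1 r := by
  refine (summable_thTerm one_ne_zero h0 (hqr.trans_lt h1)).tsum_le_tsum (fun n => ?_)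
    (summable_thTerm one_ne_zero (h0.trans_le hqr) h1)
  unfold thTerm
  simp only [one_zpow, mul_one]
  exact zpow_le_zpow_left₀ (triZ_nonneg n) h0.le hqr

/-- `P(q) = φ(q)^4 + 16 q ψ(q²)^4`. -/
noncomputable def sP (q : ℝ) : ℝ := TH q (q ^ 2) ^ 4 + q * TH 1 (q ^ 2) ^ 4
/-- `α(q) = 64 q ψ(q)^8 / P(q)²`. -/
noncomputable def sA (q : ℝ) : ℝ := q * TH 1 q ^ 8 / (4 * sP q ^ 2)

lemma sP_ge {q : ℝ} (h0 : 0 < q) (h1 : q < 1) : 1 ≤ sP q := by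
  have := one_le_pow₀ (phi_ge h0 h1) (n := 4)
  have h := psi_nonneg (qpow_pos h0 h1 2)
  have : 0 ≤ q * TH 1 (q ^ 2) ^ 4 := by positivity
  unfold sP; linarith

/-- The basic data at `q`. -/
lemma sig4_data {q : ℝ} (h0 : 0 < q) (h1 : q < 1) : ∃ s t : ℝ, 0 ≤ t ∧ t < s ∧
    TH q (q ^ 2) ^ 2 = s + t ∧ TH (-q) (q ^ 2) ^ 2 = s - t ∧
    sP q = s ^ 2 + 6 * s * t + t ^ 2 ∧ sP (q ^ 2) = s ^ 2 + t ^ 2 ∧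
    q * TH 1 q ^ 8 = 64 * (s * t) * (s + t) ^ 2 ∧ sA (q ^ 2) = (2 * s * t / (s ^ 2 + t ^ 2)) ^ 2 := by
  have e1 := phi_sq h0 h1
  have e2 := phin_sq h0 h1
  have e3 := psi_sq h0 h1
  have e4 := psi_sq (qpow_pos h0 h1 2) (qpow_lt h0 h1 2 (by norm_num))
  rw [show (q ^ 2) ^ 2 = q ^ 4 by ring] at e4
  have e5 := phin_pos h0 h1
  have e6 := psi_nonneg (qpow_pos h0 h1 4)
  have e7 : sP (q ^ 2) = (TH (q ^ 2) (q ^ 4) ^ 2) ^ 2 + (q * TH 1 (q ^ 4) ^ 2) ^ 2 := by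
    unfold sP; rw [show (q ^ 2) ^ 2 = q ^ 4 by ring]; ring
  refine ⟨TH (q ^ 2) (q ^ 4) ^ 2, q * TH 1 (q ^ 4) ^ 2, by positivity, by nlinarith, e1, e2, ?_, e7,
    ?_, ?_⟩
  · rw [sP, show TH q (q ^ 2) ^ 4 = (TH q (q ^ 2) ^ 2) ^ 2 by ring,
      show TH 1 (q ^ 2) ^ 4 = (TH 1 (q ^ 2) ^ 2) ^ 2 by ring, e1, e4]; ring
  · rw [show TH 1 q ^ 8 = (TH 1 q ^ 2) ^ 4 by ring, e3, show (2 * (TH 1 (q ^ 2) * TH q (q ^ 2))) ^ 4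
      = 16 * (TH 1 (q ^ 2) ^ 2) ^ 2 * (TH q (q ^ 2) ^ 2) ^ 2 by ring, e1, e4]; ring
  · rw [sA, e7, show TH 1 (q ^ 2) ^ 8 = (TH 1 (q ^ 2) ^ 2) ^ 4 by ring, e4]
    have : 0 < (TH (q ^ 2) (q ^ 4) ^ 2) ^ 2 + (q * TH 1 (q ^ 4) ^ 2) ^ 2 := by
      rw [← e7]; linarith [sP_ge (qpow_pos h0 h1 2) (qpow_lt h0 h1 2 (by norm_num))]
    rw [div_pow, div_eq_div_iff (by positivity) (by positivity)]
    ring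

lemma sA_compl {q : ℝ} (h0 : 0 < q) (h1 : q < 1) :
    1 - sA q = TH (-q) (q ^ 2) ^ 8 / sP q ^ 2 ∧
    4 * sP q ^ 2 = q * TH 1 q ^ 8 + 4 * TH (-q) (q ^ 2) ^ 8 := by
  obtain ⟨s, t, ht, hst, a1, a2, a3, a4, a5, a6⟩ := sig4_data h0 h1
  have hP : 0 < sP q := by linarith [sP_ge h0 h1]
  have key : 4 * sP q ^ 2 = q * TH 1 q ^ 8 + 4 * TH (-q) (q ^ 2) ^ 8 := by
    rw [a5, show TH (-q) (q ^ 2) ^ 8 = (TH (-q) (q ^ 2) ^ 2) ^ 4 by ring, a2, a3]; ring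
  refine ⟨?_, key⟩
  rw [sA]; field_simp; linear_combination key

lemma sA_bds {q : ℝ} (h0 : 0 < q) (h1 : q < 1) : 0 ≤ sA q ∧ sA q < 1 := by
  have h := (sA_compl h0 h1).1
  have hP : 0 < sP q := by linarith [sP_ge h0 h1]
  have hb := phin_pos h0 h1
  have : 0 < 1 - sA q := by rw [h]; positivity
  refine ⟨?_, by linarith⟩
  have := psi_nonneg h0
  unfold sA; positivity

lemma sF_step {q : ℝ} (h0 : 0 < q) (h1 : q < 1) :
    hF (sA q) ^ 2 / sP q = hF (sA (q ^ 2)) ^ 2 / sP (q ^ 2) := by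
  obtain ⟨s, t, ht, hst, a1, a2, a3, a4, a5, a6⟩ := sig4_data h0 h1
  have hs : 0 < s := ht.trans_lt hst
  have hN : 0 < s ^ 2 + t ^ 2 := by positivity
  have hP : 0 < s ^ 2 + 6 * s * t + t ^ 2 := by positivity
  obtain ⟨x, hx⟩ : ∃ x, x = 2 * s * t / (s ^ 2 + t ^ 2) := ⟨_, rfl⟩
  have hx0 : 0 ≤ x := by rw [hx]; positivity
  have hx1 : x < 1 := by rw [hx, div_lt_one hN]; nlinarith [sub_pos.2 hst]
  have h3 : 1 + 3 * x = (s ^ 2 + 6 * s * t + t ^ 2) / (s ^ 2 + t ^ 2) := by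
    rw [hx]; field_simp; ring
  have hu : sA q = 8 * x * (1 + x) / (1 + 3 * x) ^ 2 := by
    rw [h3, sA, a5, a3, hx]; field_simp; ring
  rw [a6, ← hx, hu, quad_transform hx0 hx1, mul_pow, Real.sq_sqrt (by linarith), a3, a4, h3]
  field_simp

open Filter Topology in
lemma sF_eq {q : ℝ} (h0 : 0 < q) (h1 : q < 1) : hF (sA q) ^ 2 = sP q := by
  have hP : 0 < sP q := by linarith [sP_ge h0 h1]
  set r : ℕ → ℝ := fun n => q ^ (2 ^ n) with hr
  have r0 : ∀ n, 0 < r n := fun n => by positivity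
  have rq : ∀ n, r n ≤ q := fun n => pow_le_of_le_one h0.le h1.le (by positivity)
  have r1 : ∀ n, r n < 1 := fun n => (rq n).trans_lt h1
  have rt : Tendsto r atTop (𝓝 0) :=
    (tendsto_pow_atTop_nhds_zero_of_lt_one h0.le h1).comp
      (tendsto_pow_atTop_atTop_of_one_lt (by norm_num))
  have hconst : ∀ n, hF (sA (r n)) ^ 2 / sP (r n) = hF (sA q) ^ 2 / sP q := by
    intro n
    induction n with
    | zero => simp [hr]
    | succ n ih =>
      rw [← ih, sF_step (r0 n) (r1 n)]
      have : r (n + 1) = r n ^ 2 := by simp only [hr]; rw [← pow_mul, pow_succ]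
      rw [this]
  have hphi : Tendsto (fun n => TH (r n) (r n ^ 2)) atTop (𝓝 1) := by
    have hs := summable_thTerm h0.ne' (qpow_pos h0 h1 2) (qpow_lt h0 h1 2 (by norm_num))
    have := tendsto_tsum_of_dominated_convergence (𝓕 := atTop)
      (f := fun n m => thTerm (r n) (r n ^ 2) m) (g := fun m : ℤ => if m = 0 then (1:ℝ) else 0)
      hs (fun m => by
        simp only [thTerm_phi (r0 _)]
        by_cases hm : m = 0
        · simp [hm]
        · simp only [hm, if_false]
          have e : ∀ n, r n ^ (m ^ 2) = r n ^ (m.natAbs ^ 2) := fun n => by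
            rw [← zpow_natCast]; congr 1; push_cast; rw [sq_abs]
          simp only [e]
          have := rt.pow (m.natAbs ^ 2)
          rwa [zero_pow (by simpa using hm)] at this)
      (Eventually.of_forall fun n m => by
        rw [thTerm_phi (r0 n), thTerm_phi h0, Real.norm_eq_abs, abs_of_pos (zpow_pos (r0 n) _)]
        exact zpow_le_zpow_left₀ (sq_nonneg m) (r0 n).le (rq n))
    simpa [TH] using this
  have hpsi1 : ∀ n, TH 1 (r n) ≤ TH 1 q := fun n => psi_mono (r0 n) (rq n) h1
  have hpsi2 : ∀ n, TH 1 (r n ^ 2) ≤ TH 1 q := fun n =>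
    psi_mono (by have := r0 n; positivity) (by nlinarith [r0 n, r1 n, rq n]) h1
  have hPt : Tendsto (fun n => sP (r n)) atTop (𝓝 1) := by
    have h2 : Tendsto (fun n => r n * TH 1 (r n ^ 2) ^ 4) atTop (𝓝 0) := by
      refine squeeze_zero (g := fun n => r n * TH 1 q ^ 4) (fun n => ?_) (fun n => ?_) ?_
      · have := psi_nonneg (pow_pos (r0 n) 2); have := r0 n; positivity
      · have := psi_nonneg (pow_pos (r0 n) 2); have := (r0 n).le; have := hpsi2 n
        gcongr
      · simpa using rt.mul_const (TH 1 q ^ 4)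
    simpa [sP] using (hphi.pow 4).add h2
  have hAt : Tendsto (fun n => sA (r n)) atTop (𝓝 0) := by
    refine squeeze_zero (g := fun n => r n * TH 1 q ^ 8) (fun n => (sA_bds (r0 n) (r1 n)).1)
      (fun n => ?_) (by simpa using rt.mul_const (TH 1 q ^ 8))
    have hp := sP_ge (r0 n) (r1 n)
    have hn := psi_nonneg (r0 n)
    have := hpsi1 n
    have := (r0 n).le
    calc sA (r n) ≤ r n * TH 1 (r n) ^ 8 := by
          rw [sA]; apply div_le_self (by positivity); nlinarith
      _ ≤ _ := by gcongr
  have hFt : Tendsto (fun n => hF (sA (r n))) atTop (𝓝 1) := by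
    have hc : ContinuousAt hF 0 := (hF_deriv (by simp)).continuousAt
    have := hc.tendsto.comp hAt
    rwa [hF_zero] at this
  have hlim := (hFt.pow 2).div hPt one_ne_zero
  have : (1:ℝ) ^ 2 / 1 = hF (sA q) ^ 2 / sP q := by
    refine tendsto_nhds_unique hlim ?_
    exact tendsto_const_nhds.congr fun n => (hconst n).symm
  rw [eq_div_iff hP.ne'] at this
  linarith

/-! Fricke involution -/

lemma phi_exp {a : ℝ} : TH (Real.exp (-π * a)) (Real.exp (-π * a) ^ 2)
    = ∑' n : ℤ, Real.exp (-π * a * (n : ℝ) ^ 2) := by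
  unfold TH
  refine tsum_congr fun n => ?_
  rw [thTerm_phi (Real.exp_pos _), ← Real.rpow_intCast, ← Real.exp_mul]
  push_cast; rfl

lemma phi_trans {a : ℝ} (ha : 0 < a) : TH (Real.exp (-π * a)) (Real.exp (-π * a) ^ 2)
    = 1 / Real.sqrt a * TH (Real.exp (-π * a⁻¹)) (Real.exp (-π * a⁻¹) ^ 2) := by
  rw [phi_exp, phi_exp, Real.tsum_exp_neg_mul_int_sq ha, Real.sqrt_eq_rpow]
  rfl

lemma phi_four {r : ℝ} (h0 : 0 < r) (h1 : r < 1) :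
    TH r (r ^ 2) = TH (r ^ 4) (r ^ 8) + r * TH 1 (r ^ 8) ∧
    TH (-r) (r ^ 2) = TH (r ^ 4) (r ^ 8) - r * TH 1 (r ^ 8) := by
  have hs := TH_self (qpow_pos h0 h1 8) (qpow_lt h0 h1 8 (by norm_num))
  constructor
  · rw [TH_L2 h0.ne' (qpow_pos h0 h1 2) (qpow_lt h0 h1 2 (by norm_num)),
      show r ^ 2 * r ^ 2 = r ^ 4 by ring, show (r ^ 2) ^ 4 = r ^ 8 by ring,
      show (r ^ 2) ^ 3 * r ^ 2 = r ^ 8 by ring, hs]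
  · rw [TH_L2 (neg_ne_zero.2 h0.ne') (qpow_pos h0 h1 2) (qpow_lt h0 h1 2 (by norm_num)),
      show r ^ 2 * (-r) ^ 2 = r ^ 4 by ring, show (r ^ 2) ^ 4 = r ^ 8 by ring,
      show (r ^ 2) ^ 3 * (-r) ^ 2 = r ^ 8 by ring, hs]
    ring

lemma fricke {σ : ℝ} (hσ : 0 < σ) :
    sP (Real.exp (-π * σ⁻¹) ^ 2) = σ ^ 2 / 2 * sP (Real.exp (-π * σ)) ∧
    sA (Real.exp (-π * σ⁻¹) ^ 2) = 1 - sA (Real.exp (-π * σ)) := by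
  have lt1 : ∀ a : ℝ, 0 < a → Real.exp (-π * a) < 1 := fun a ha => by
    rw [Real.exp_lt_one_iff]; nlinarith [mul_pos Real.pi_pos ha]
  obtain ⟨q, hq⟩ : ∃ q, q = Real.exp (-π * σ) := ⟨_, rfl⟩
  obtain ⟨Q, hQ⟩ : ∃ Q, Q = Real.exp (-π * σ⁻¹) := ⟨_, rfl⟩
  obtain ⟨r, hr⟩ : ∃ r, r = Real.exp (-π * (σ / 4)) := ⟨_, rfl⟩
  have q0 : 0 < q := hq ▸ Real.exp_pos _
  have Q0 : 0 < Q := hQ ▸ Real.exp_pos _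
  have r0 : 0 < r := hr ▸ Real.exp_pos _
  have q1 : q < 1 := hq ▸ lt1 _ hσ
  have Q1 : Q < 1 := hQ ▸ lt1 _ (by positivity)
  have r1 : r < 1 := hr ▸ lt1 _ (by positivity)
  have rq : r ^ 4 = q := by
    rw [hr, hq, ← Real.exp_nat_mul]; congr 1; push_cast; ring
  have Q4 : Real.exp (-π * (σ / 4)⁻¹) = Q ^ 4 := by
    rw [hQ, ← Real.exp_nat_mul]; congr 1; push_cast; field_simp
  have t1 := phi_trans hσ
  have t2 := phi_trans (a := σ / 4) (by positivity)
  rw [← hq, ← hQ] at t1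
  rw [← hr, Q4] at t2
  rw [← hq, ← hQ]
  have hsq : Real.sqrt (σ / 4) = Real.sqrt σ / 2 := by
    rw [Real.sqrt_div hσ.le, show (4:ℝ) = 2 ^ 2 by norm_num, Real.sqrt_sq (by norm_num)]
  obtain ⟨w, hw⟩ : ∃ w, w = Real.sqrt σ := ⟨_, rfl⟩
  have w0 : 0 < w := hw ▸ Real.sqrt_pos.2 hσ
  have w2 : w ^ 2 = σ := by rw [hw, Real.sq_sqrt hσ.le]
  rw [hsq, ← hw, show (Q ^ 4) ^ 2 = Q ^ 8 by ring] at t2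
  rw [← hw] at t1
  have f1 := (phi_four r0 r1).1
  have f2 := phi_four Q0 Q1
  rw [show r ^ 8 = (r ^ 4) ^ 2 by ring, rq] at f1
  have g1 : TH q (q ^ 2) = TH Q (Q ^ 2) / w := by rw [t1]; ring
  have g2 : r * TH 1 (q ^ 2) = TH (-Q) (Q ^ 2) / w := by
    have : r * TH 1 (q ^ 2) = TH r (r ^ 2) - TH q (q ^ 2) := by rw [f1]; ring
    rw [this, t2, g1, f2.1, f2.2]; field_simp; ring
  have hPq : sP q = (TH Q (Q ^ 2) ^ 4 + TH (-Q) (Q ^ 2) ^ 4) / σ ^ 2 := by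
    have : sP q = TH q (q ^ 2) ^ 4 + (r * TH 1 (q ^ 2)) ^ 4 := by
      rw [sP, mul_pow, rq]
    rw [this, g1, g2, ← w2]; field_simp
  obtain ⟨s, t, ht, hst, a1, a2, a3, a4, a5, a6⟩ := sig4_data Q0 Q1
  have hs : 0 < s := ht.trans_lt hst
  have e1 : TH Q (Q ^ 2) ^ 4 = (s + t) ^ 2 := by rw [← a1]; ring
  have e2 : TH (-Q) (Q ^ 2) ^ 4 = (s - t) ^ 2 := by rw [← a2]; ring
  have hPq' : sP q = 2 * (s ^ 2 + t ^ 2) / σ ^ 2 := by rw [hPq, e1, e2]; ring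
  refine ⟨by rw [a4, hPq']; field_simp, ?_⟩
  have hA : q * TH 1 q ^ 8 = 16 * ((s + t) ^ 2 * (s - t) ^ 2) / σ ^ 4 := by
    rw [show TH 1 q ^ 8 = (TH 1 q ^ 2) ^ 4 by ring, psi_sq q0 q1]
    have : q * (2 * (TH 1 (q ^ 2) * TH q (q ^ 2))) ^ 4
      = 16 * ((r * TH 1 (q ^ 2)) ^ 4 * TH q (q ^ 2) ^ 4) := by rw [← rq]; ring
    rw [this, g1, g2, div_pow, div_pow, e1, e2, ← w2]; field_simp
  rw [a6, sA, hA, hPq']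
  field_simp
  ring

lemma nome4_sA {q : ℝ} (h0 : 0 < q) (h1 : q < 1) : nome4 (sA q) = q := by
  obtain ⟨σ, hσ⟩ : ∃ σ, σ = -Real.log q / π := ⟨_, rfl⟩
  have hpi := Real.pi_pos
  have hσ0 : 0 < σ := by rw [hσ]; exact div_pos (neg_pos.2 (Real.log_neg h0 h1)) hpi
  have hq : Real.exp (-π * σ) = q := by
    rw [hσ, show -π * (-Real.log q / π) = Real.log q by field_simp, Real.exp_log h0]
  obtain ⟨f1, f2⟩ := fricke hσ0
  rw [hq] at f1 f2
  have Q0 : 0 < Real.exp (-π * σ⁻¹) := Real.exp_pos _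
  have Q1 : Real.exp (-π * σ⁻¹) < 1 := by
    rw [Real.exp_lt_one_iff]; nlinarith [mul_pos hpi (inv_pos.2 hσ0)]
  have g1 := sF_eq h0 h1
  have g2 := sF_eq (qpow_pos Q0 Q1 2) (qpow_lt Q0 Q1 2 (by norm_num))
  rw [f1, f2, ← g1] at g2
  have b := sA_bds h0 h1
  have bQ := sA_bds (qpow_pos Q0 Q1 2) (qpow_lt Q0 Q1 2 (by norm_num))
  rw [f2] at bQ
  have p1 := hF_ge b.1 b.2
  have p2 := hF_ge bQ.1 bQ.2
  have h2 : Real.sqrt 2 ^ 2 = 2 := Real.sq_sqrt (by norm_num)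
  have h2p : 0 < Real.sqrt 2 := Real.sqrt_pos.2 (by norm_num)
  have key : hF (1 - sA q) = σ / Real.sqrt 2 * hF (sA q) := by
    refine (pow_left_inj₀ (by linarith) (by positivity) two_ne_zero).1 ?_
    rw [g2, mul_pow, div_pow, h2]
  rw [nome4, hyp_eq_hF, hyp_eq_hF, key]
  conv_rhs => rw [← hq]
  congr 1
  have : hF (sA q) ≠ 0 := by linarith
  field_simp

theorem Rq_inversion_formula :
    ∃ ε > 0, ∀ q : ℝ, 0 < q → q < ε →
      Rq q ^ 5 = (Rq q * Rq (q ^ 2) ^ 2) * (1 - Rq q * Rq (q ^ 2) ^ 2) ^ 2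
          / (1 + Rq q * Rq (q ^ 2) ^ 2) ^ 2
        ∧ q = nome4 (64 * (Rq q * Rq (q ^ 2) ^ 2)
            * (1 + (Rq q * Rq (q ^ 2) ^ 2) - (Rq q * Rq (q ^ 2) ^ 2) ^ 2) ^ 5
            / ((1 + (Rq q * Rq (q ^ 2) ^ 2) ^ 2) ^ 2
              * ((1 + 11 * (Rq q * Rq (q ^ 2) ^ 2)
                  - (Rq q * Rq (q ^ 2) ^ 2) ^ 2) ^ 2
                - 125 * (Rq q * Rq (q ^ 2) ^ 2) ^ 2) ^ 2)) := by
  refine ⟨1, one_pos, fun q h0 h1 => ?_⟩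
  obtain ⟨k1, k2⟩ := k_main h0 h1
  refine ⟨k1, ?_⟩
  rw [k2, ← (sA_compl h0 h1).2]
  exact (nome4_sA h0 h1).symm
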